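/- arXiv:2305.04781 — 5 statements merged into one kernel-verified Lean document; each statement's English description precedes it below -/
import Mathlib

section
/- (Sylvester–Schur) Let m and k be positive integers with m ≥ k. Then there exists a prime p with p ≥ k+1 which divides one of the integers m+1, m+2, …, m+k. -/
/-!
The prime divisors `p > k` of `m + 1, …, m + k` are those of `(m + k).choose k`, so with
`n = m + k` one has to show that `n.choose k` is never `k`-smooth when `2 * k ≤ n`. Following
Erdős, suppose it is. Every prime power dividing `n.choose k` is at most `n`, hence
`(n / k) ^ k ≤ n.choose k ≤ n ^ π k`. This confines `n` to `n < 210` for `k < 37`, to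
`n ^ 2 ≤ k ^ 3` as soon as `3 * π k ≤ k`, and to `n ^ 3 ≤ k ^ 4` as soon as `4 * π k ≤ k`. For
`k < 13 ^ 3` this leaves finitely many `n`, each settled by a prime `p > k` with `n % p < k`,
most simply one in `(n - k, n]`. For larger `k`, primes above `√n` divide `n.choose k` at most
once, so `n.choose k ≤ n ^ π (√n) * 4 ^ k`, and this is too small when `5 * k ≤ 2 * n`. When
`2 * n < 5 * k` no prime in `(n / 3, k]` divides `n.choose k`, so `4 ^ k` improves to
`4 ^ (n / 3)`, which is again too small.
-/

namespace SylvesterSchur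

open Finset Nat
open scoped Nat.Prime

section PrimeCounting

lemma primeCounting_le_self (n : ℕ) : π n ≤ n := by
  rw [← primesLE_card_eq_primeCounting]
  have hsubset : primesLE n ⊆ Ioc 0 n := fun p hp ↦
    mem_Ioc.2 ⟨(prime_of_mem_primesLE hp).pos, (mem_primesLE.1 hp).1⟩
  exact (card_le_card hsubset).trans_eq (Nat.card_Ioc 0 n)

lemma primeCounting_add_le_add_totient {a n : ℕ} (ha : ∀ p, p.Prime → p ∣ a → p ≤ n) :
    π (n + a) ≤ π n + φ a := by
  have hcoprime : {p ∈ Ico (n + 1) (n + 1 + a) | p.Prime} ⊆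
      {x ∈ Ico (n + 1) (n + 1 + a) | a.Coprime x} := by
    refine monotone_filter_right _ fun p hp (hprime : p.Prime) ↦ ?_
    refine (hprime.coprime_iff_not_dvd.2 fun hpa ↦ ?_).symm
    exact absurd (ha p hprime hpa) (by grind)
  have hcard : π (n + a) ≤ π n + #{p ∈ Ico (n + 1) (n + 1 + a) | p.Prime} := by
    rw [primeCounting, primeCounting', primeCounting, primeCounting', count_eq_card_filter_range,
      count_eq_card_filter_range, range_eq_Ico, range_eq_Ico, add_right_comm,
      ← Ico_union_Ico_eq_Ico (Nat.zero_le (n + 1)) (Nat.le_add_right (n + 1) a), filter_union]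
    exact card_union_le _ _
  refine hcard.trans (Nat.add_le_add_left ?_ _)
  rw [← filter_coprime_Ico_eq_totient a (n + 1)]
  exact card_le_card hcoprime

lemma mul_primeCounting_le_add_of_forall_Ico {a c d N : ℕ} (ha₀ : 0 < a)
    (ha : ∀ p, p.Prime → p ∣ a → p ≤ N) (hc : c * φ a ≤ a)
    (hwindow : ∀ n ∈ Ico N (N + a), c * π n ≤ n + d) {n : ℕ} (hn : N ≤ n) :
    c * π n ≤ n + d := by
  induction n using Nat.strong_induction_on with
  | _ n ih =>
    rcases lt_or_ge n (N + a) with hlt | hge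
    · exact hwindow n (mem_Ico.2 ⟨hn, hlt⟩)
    · obtain ⟨j, rfl⟩ := Nat.exists_eq_add_of_le' (le_of_add_left_le hge)
      have hj : N ≤ j := by omega
      calc c * π (j + a)
          ≤ c * (π j + φ a) := by
            gcongr
            exact primeCounting_add_le_add_totient fun p hp hpa ↦ (ha p hp hpa).trans hj
        _ = c * π j + c * φ a := mul_add ..
        _ ≤ (j + d) + a := Nat.add_le_add (ih j (by omega) hj) hc
        _ = j + a + d := by ring

lemma three_mul_primeCounting_le {n : ℕ} (hn : 37 ≤ n) : 3 * π n ≤ n :=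
  mul_primeCounting_le_add_of_forall_Ico (a := 30) (d := 0) (by norm_num)
    (fun p _ h ↦ (Nat.le_of_dvd (by norm_num) h).trans (by norm_num)) (by decide)
    (by decide +kernel) hn

lemma le_seven_of_prime_of_dvd_210 {p : ℕ} (hp : p.Prime) (h : p ∣ 210) : p ≤ 7 := by
  have hle : ∀ p ∈ primeFactors 210, p ≤ 7 := by decide +kernel
  exact hle p (hp.mem_primeFactors h (by norm_num))

lemma four_mul_primeCounting_le_add (n : ℕ) : 4 * π n ≤ n + 13 := by
  have hsmall : ∀ n < 217, 4 * π n ≤ n + 13 := by decide +kernel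
  rcases lt_or_ge n 7 with hn | hn
  · exact hsmall n (by omega)
  · exact mul_primeCounting_le_add_of_forall_Ico (a := 210) (N := 7) (by norm_num)
      (fun p ↦ le_seven_of_prime_of_dvd_210) (by decide +kernel)
      (fun n hn ↦ hsmall n (mem_Ico.1 hn).2) hn

lemma four_mul_primeCounting_le {n : ℕ} (hn : 217 ≤ n) : 4 * π n ≤ n := by
  obtain ⟨j, rfl⟩ := Nat.exists_eq_add_of_le' (show 210 ≤ n by omega)
  have hstep : π (j + 210) ≤ π j + φ 210 := primeCounting_add_le_add_totient
    fun p hp h ↦ (le_seven_of_prime_of_dvd_210 hp h).trans (by omega)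
  have htotient : φ 210 = 48 := by decide +kernel
  have := four_mul_primeCounting_le_add j
  omega

end PrimeCounting

section Choose

variable {n k p : ℕ}

lemma dvd_choose_iff_mod_lt (hp : p.Prime) (hkp : k < p) : p ∣ n.choose k ↔ n % p < k := by
  have := Fact.mk hp
  have lucas : n.choose k ≡ (n % p).choose k [MOD p] := by
    simpa [Nat.mod_eq_of_lt hkp, Nat.div_eq_of_lt hkp] using
      Choose.choose_modEq_choose_mod_mul_choose_div_nat (n := n) (k := k) (p := p)
  rw [lucas.dvd_iff dvd_rfl]
  refine ⟨fun h ↦ ?_, fun h ↦ by simp [Nat.choose_eq_zero_of_lt h]⟩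
  by_contra! hk
  have hfactorial : p ∣ (n % p)! :=
    h.trans ⟨k ! * (n % p - k)!, by rw [← mul_assoc, choose_mul_factorial_mul_factorial hk]⟩
  exact (Nat.mod_lt n hp.pos).not_ge (hp.dvd_factorial.1 hfactorial)

lemma pow_le_choose_mul_pow (hkn : k ≤ n) : n ^ k ≤ n.choose k * k ^ k := by
  refine Nat.le_of_mul_le_mul_left (c := k !) ?_ k.factorial_pos
  calc k ! * n ^ k
      = ∏ i ∈ range k, (k - i) * n := by
        rw [← descFactorial_self, descFactorial_eq_prod_range, prod_mul_distrib]; simp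
    _ ≤ ∏ i ∈ range k, (n - i) * k := by
        refine prod_le_prod' fun i _ ↦ ?_
        rw [Nat.sub_mul, Nat.sub_mul, mul_comm n k]
        gcongr
    _ = k ! * (n.choose k * k ^ k) := by
        rw [prod_mul_distrib, ← descFactorial_eq_prod_range, descFactorial_eq_factorial_mul_choose]
        simp [mul_assoc]

lemma choose_eq_prod_primeFactors (hkn : k ≤ n) :
    n.choose k = ∏ p ∈ (n.choose k).primeFactors, p ^ (n.choose k).factorization p := by
  rw [← prod_factorization_eq_prod_primeFactors,
    prod_factorization_pow_eq_self (choose_ne_zero hkn)]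

lemma choose_le_pow_mul_primorial {u : ℕ} (hn : 0 < n) (hkn : k ≤ n)
    (hu : ∀ p, p.Prime → sqrt n < p → p ∣ n.choose k → p ≤ u) :
    n.choose k ≤ n ^ π (sqrt n) * primorial u := by
  set s := (n.choose k).primeFactors
  have hsmall : ∏ p ∈ s with p ≤ sqrt n, p ^ (n.choose k).factorization p ≤ n ^ π (sqrt n) := by
    refine (prod_le_pow_card _ _ _ fun p _ ↦ pow_factorization_choose_le hn).trans ?_
    rw [← primesLE_card_eq_primeCounting]
    gcongr
    intro p hp
    grind [mem_primesLE]
  have hlarge : ∏ p ∈ s with ¬p ≤ sqrt n, p ^ (n.choose k).factorization p ≤ primorial u := by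
    calc ∏ p ∈ s with ¬p ≤ sqrt n, p ^ (n.choose k).factorization p
        ≤ ∏ p ∈ s with ¬p ≤ sqrt n, p := by
          refine prod_le_prod' fun p hp ↦ ?_
          obtain ⟨hps, hp⟩ := mem_filter.1 hp
          have hsq : n < p ^ 2 := by rw [sq]; exact sqrt_lt.1 (not_le.1 hp)
          exact (Nat.pow_le_pow_right (pos_of_mem_primeFactors hps)
            (factorization_choose_le_one hsq)).trans_eq (pow_one p)
      _ ≤ primorial u := by
          rw [primorial_eq_prod_primesLE]
          refine prod_le_prod_of_subset_of_one_le' (fun p hp ↦ ?_) fun p hp _ ↦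
            (prime_of_mem_primesLE hp).pos
          obtain ⟨hps, hp⟩ := mem_filter.1 hp
          exact mem_primesLE.2 ⟨hu p (prime_of_mem_primeFactors hps) (not_le.1 hp)
            (dvd_of_mem_primeFactors hps), prime_of_mem_primeFactors hps⟩
  rw [choose_eq_prod_primeFactors hkn, ← prod_filter_mul_prod_filter_not s (· ≤ sqrt n)]
  exact Nat.mul_le_mul hsmall hlarge

lemma five_pow_mul_centralBinom_le (k : ℕ) : ∀ t, 2 * t ≤ k →
    5 ^ t * centralBinom k ≤ 3 ^ t * (2 * k + t).choose k
  | 0, _ => by simp [centralBinom]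
  | t + 1, ht => by
    have hstep : 5 * (2 * k + t).choose k ≤ 3 * (2 * k + (t + 1)).choose k := by
      have hratio := choose_mul_succ_eq (2 * k + t) k
      rw [show 2 * k + t + 1 - k = k + t + 1 by omega] at hratio
      refine Nat.le_of_mul_le_mul_right (c := k + t + 1) ?_ (by omega)
      calc 5 * (2 * k + t).choose k * (k + t + 1)
          = (2 * k + t).choose k * (5 * (k + t + 1)) := by ring
        _ ≤ (2 * k + t).choose k * (3 * (2 * k + t + 1)) :=
            Nat.mul_le_mul_left _ (by omega)
        _ = 3 * ((2 * k + t).choose k * (2 * k + t + 1)) := by ring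
        _ = 3 * (2 * k + (t + 1)).choose k * (k + t + 1) := by rw [hratio, ← add_assoc]; ring
    calc 5 ^ (t + 1) * centralBinom k
        = 5 * (5 ^ t * centralBinom k) := by ring
      _ ≤ 5 * (3 ^ t * (2 * k + t).choose k) :=
          Nat.mul_le_mul_left _ (five_pow_mul_centralBinom_le k t (by omega))
      _ = 3 ^ t * (5 * (2 * k + t).choose k) := by ring
      _ ≤ 3 ^ t * (3 * (2 * k + (t + 1)).choose k) := by gcongr
      _ = 3 ^ (t + 1) * (2 * k + (t + 1)).choose k := by ring

end Choose

section Chain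

lemma exists_rel_le_lt_of_isChain {α : Type*} [LinearOrder α] {R : α → α → Prop} {x b : α} :
    ∀ {a : α} {l : List α}, (a :: l).IsChain R → a ≤ x → b ∈ l → x < b →
      ∃ q ∈ a :: l, ∃ r, R q r ∧ q ≤ x ∧ x < r
  | a, r :: l, hchain, ha, hb, hx => by
    rw [List.isChain_cons_cons] at hchain
    rcases lt_or_ge x r with hr | hr
    · exact ⟨a, List.mem_cons_self, r, hchain.1, ha, hr⟩
    · have hbl : b ∈ l := (List.mem_cons.1 hb).resolve_left (by grind)
      obtain ⟨q, hq, h⟩ := exists_rel_le_lt_of_isChain hchain.2 hr hbl hx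
      exact ⟨q, List.mem_cons_of_mem _ hq, h⟩

variable {n k c : ℕ}

lemma exists_prime_le_lt_add_of_isChain {a b : ℕ} {l : List ℕ}
    (hprime : ∀ p ∈ a :: l, p.Prime)
    (hchain : (a :: l).IsChain fun q r ↦ (r - 1 - q) ^ (c + 1) < q ^ c)
    (hnk : n ^ c ≤ k ^ (c + 1)) (ha : a ≤ n) (hb : b ∈ l) (hn : n < b) :
    ∃ p, p.Prime ∧ p ≤ n ∧ n < p + k := by
  obtain ⟨q, hq, r, hgap, hqn, hnr⟩ := exists_rel_le_lt_of_isChain hchain ha hb hn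
  refine ⟨q, hprime q hq, hqn, ?_⟩
  by_contra! hk
  refine hgap.not_ge ?_
  calc q ^ c ≤ n ^ c := by gcongr
    _ ≤ k ^ (c + 1) := hnk
    _ ≤ (r - 1 - q) ^ (c + 1) := by gcongr; omega

lemma exists_prime_le_lt_add_of_sq_le_cube (hnk : n ^ 2 ≤ k ^ 3) (hn : 73 ≤ n) (hk : k < 217) :
    ∃ p, p.Prime ∧ p ≤ n ∧ n < p + k := by
  have hn' : n < 3331 := lt_of_pow_lt_pow_left₀ 2 (by norm_num) <|
    calc n ^ 2 ≤ k ^ 3 := hnk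
      _ < 217 ^ 3 := by gcongr
      _ < 3331 ^ 2 := by norm_num
  exact exists_prime_le_lt_add_of_isChain (c := 2) (a := 73) (b := 3331)
    (l := [89, 109, 131, 157, 181, 211, 241, 277, 317, 359, 409, 463, 523, 587, 653, 727, 797, 883,
      971, 1069, 1171, 1283, 1399, 1523, 1637, 1759, 1901, 2053, 2213, 2383, 2557, 2741, 2927, 3121,
      3331])
    (by norm_num) (by decide +kernel) hnk hn (by decide) hn'

lemma exists_prime_le_lt_add_of_cube_le_pow_four (hnk : n ^ 3 ≤ k ^ 4) (hn : 433 ≤ n)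
    (hk : k < 13 ^ 3) : ∃ p, p.Prime ∧ p ≤ n ∧ n < p + k := by
  have hn' : n < 29201 := lt_of_pow_lt_pow_left₀ 3 (by norm_num) <|
    calc n ^ 3 ≤ k ^ 4 := hnk
      _ < (13 ^ 3) ^ 4 := by gcongr
      _ < 29201 ^ 3 := by norm_num
  exact exists_prime_le_lt_add_of_isChain (c := 3) (a := 433) (b := 29201)
    (l := [523, 631, 757, 887, 1049, 1231, 1439, 1669, 1931, 2221, 2543, 2897, 3271, 3701, 4159,
      4673, 5237, 5851, 6491, 7213, 7993, 8839, 9749, 10729, 11783, 12911, 14107, 15401, 16763,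
      18233, 19801, 21467, 23227, 25097, 27091, 29201])
    (by norm_num) (by decide +kernel) hnk hn (by decide) hn'

end Chain

section Analytic

lemma mul_log_add_log_four_lt {y : ℝ} (hy : 13 ≤ y) :
    6 * (y ^ 2 + 17) * Real.log y + Real.log 4 < y ^ 3 * Real.log 4 := by
  have hlog_four : Real.log 4 = 2 * Real.log 2 := by
    rw [show (4 : ℝ) = 2 ^ 2 by norm_num, Real.log_pow, Nat.cast_ofNat]
  have hlog_y : Real.log y ≤ y / 16 + 1.7726 := by
    have htangent : Real.log (y / 2 ^ 4) ≤ y / 2 ^ 4 - 1 :=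
      Real.log_le_sub_one_of_pos (by positivity)
    rw [Real.log_div (by positivity) (by positivity), Real.log_pow] at htangent
    norm_num at htangent
    linarith [Real.log_two_lt_d9]
  have hpoly : 6 * (y ^ 2 + 17) * (y / 16 + 1.7726) < (y ^ 3 - 1) * (2 * 0.693) := by
    obtain ⟨z, hz, rfl⟩ : ∃ z, 0 ≤ z ∧ y = z + 13 := ⟨y - 13, by linarith, by ring⟩
    nlinarith [pow_nonneg hz 2, pow_nonneg hz 3]
  have hlog_two : (y ^ 3 - 1) * (2 * 0.693) ≤ (y ^ 3 - 1) * Real.log 4 := by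
    have : 1 ≤ y ^ 3 := one_le_pow₀ (by linarith)
    gcongr
    linarith [Real.log_two_gt_d9]
  have : 6 * (y ^ 2 + 17) * Real.log y ≤ 6 * (y ^ 2 + 17) * (y / 16 + 1.7726) := by gcongr
  linarith

lemma four_mul_pow_lt_four_pow {n k : ℕ} (hk : 13 ^ 3 ≤ k) (hn : 2 * k ≤ n) (hnk : n ^ 3 ≤ k ^ 4) :
    4 * (2 * k * n ^ π (sqrt n)) ^ 6 < 4 ^ k := by
  obtain ⟨y, hy₀, hy⟩ : ∃ y : ℝ, 0 ≤ y ∧ y ^ 3 = k :=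
    ⟨(k : ℝ) ^ (3⁻¹ : ℝ), by positivity, Real.rpow_inv_natCast_pow (by positivity) (by norm_num)⟩
  have hy13 : 13 ≤ y := le_of_pow_le_pow_left₀ three_ne_zero hy₀ (by rw [hy]; exact_mod_cast hk)
  have hn₀ : (0 : ℝ) < n := by norm_cast; omega
  have hny : (n : ℝ) ≤ y ^ 4 := by
    refine le_of_pow_le_pow_left₀ three_ne_zero (by positivity) ?_
    calc (n : ℝ) ^ 3 ≤ (k : ℝ) ^ 4 := by exact_mod_cast hnk
      _ = (y ^ 4) ^ 3 := by rw [← hy]; ring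
  have hsqrt : (sqrt n : ℝ) ≤ y ^ 2 := by
    refine le_of_pow_le_pow_left₀ two_ne_zero (by positivity) ?_
    calc (sqrt n : ℝ) ^ 2 ≤ n := by exact_mod_cast sqrt_le' n
      _ ≤ (y ^ 2) ^ 2 := hny.trans_eq (by ring)
  have hcount : 4 * ((π (sqrt n) : ℝ) + 1) ≤ y ^ 2 + 17 := by
    have : 4 * (π (sqrt n) : ℝ) ≤ sqrt n + 13 := by
      exact_mod_cast four_mul_primeCounting_le_add (sqrt n)
    linarith
  have hlog : Real.log n ≤ 4 * Real.log y := by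
    calc Real.log n ≤ Real.log (y ^ 4) := Real.log_le_log hn₀ hny
      _ = 4 * Real.log y := by rw [Real.log_pow, Nat.cast_ofNat]
  have hlog_y : 0 ≤ Real.log y := Real.log_nonneg (by linarith)
  have hpow : (4 : ℝ) * (n ^ (π (sqrt n) + 1)) ^ 6 < 4 ^ k := by
    rw [← Real.log_lt_log_iff (by positivity) (by positivity),
      Real.log_mul (by positivity) (by positivity), Real.log_pow, Real.log_pow, Real.log_pow, ← hy]
    push_cast
    calc Real.log 4 + 6 * ((π (sqrt n) + 1) * Real.log n)
        ≤ Real.log 4 + 6 * ((π (sqrt n) + 1) * (4 * Real.log y)) := by gcongr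
      _ = 6 * (4 * (π (sqrt n) + 1)) * Real.log y + Real.log 4 := by ring
      _ ≤ 6 * (y ^ 2 + 17) * Real.log y + Real.log 4 := by gcongr
      _ < y ^ 3 * Real.log 4 := mul_log_add_log_four_lt hy13
  calc 4 * (2 * k * n ^ π (sqrt n)) ^ 6
      ≤ 4 * (n * n ^ π (sqrt n)) ^ 6 := by gcongr
    _ = 4 * (n ^ (π (sqrt n) + 1)) ^ 6 := by rw [pow_succ' n]
    _ < 4 ^ k := by exact_mod_cast hpow

end Analytic

section Smooth

variable {n k : ℕ}

lemma choose_notMem_smoothNumbers_of_mod_lt {p : ℕ} (hp : p.Prime) (hkp : k < p)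
    (hmod : n % p < k) : n.choose k ∉ smoothNumbers (k + 1) := fun hsmooth ↦
  hkp.not_ge <| Nat.lt_succ_iff.1 <|
    mem_smoothNumbers'.1 hsmooth p hp ((dvd_choose_iff_mod_lt hp hkp).2 hmod)

lemma choose_notMem_smoothNumbers_of_prime_le_lt_add {p : ℕ} (hp : p.Prime) (hpn : p ≤ n)
    (hnp : n < p + k) (hn : 2 * k ≤ n) : n.choose k ∉ smoothNumbers (k + 1) := by
  refine choose_notMem_smoothNumbers_of_mod_lt hp (by omega) ?_
  rw [Nat.mod_eq_sub_mod hpn, Nat.mod_eq_of_lt (by omega)]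
  omega

lemma le_of_choose_mem_smoothNumbers (h : n.choose k ∈ smoothNumbers (k + 1)) : k ≤ n := by
  by_contra! hlt
  exact ne_zero_of_mem_smoothNumbers h (choose_eq_zero_of_lt hlt)

lemma choose_le_pow_primeCounting_of_mem_smoothNumbers (hn : 0 < n)
    (h : n.choose k ∈ smoothNumbers (k + 1)) : n.choose k ≤ n ^ π k := by
  rw [choose_eq_prod_primeFactors (le_of_choose_mem_smoothNumbers h)]
  refine (prod_le_pow_card _ _ _ fun p _ ↦ pow_factorization_choose_le hn).trans ?_
  rw [← primesLE_card_eq_primeCounting]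
  gcongr
  exact primeFactors_subset_of_mem_smoothNumbers h

lemma pow_sub_primeCounting_le_of_mem_smoothNumbers (hn : 0 < n)
    (h : n.choose k ∈ smoothNumbers (k + 1)) : n ^ (k - π k) ≤ k ^ k := by
  refine Nat.le_of_mul_le_mul_left (c := n ^ π k) ?_ (by positivity)
  calc n ^ π k * n ^ (k - π k)
      = n ^ k := by rw [← pow_add, Nat.add_sub_cancel' (primeCounting_le_self k)]
    _ ≤ n.choose k * k ^ k := pow_le_choose_mul_pow (le_of_choose_mem_smoothNumbers h)
    _ ≤ n ^ π k * k ^ k :=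
        Nat.mul_le_mul_right _ (choose_le_pow_primeCounting_of_mem_smoothNumbers hn h)

lemma lt_210_of_mem_smoothNumbers (hk₀ : 0 < k) (hk : k < 37)
    (h : n.choose k ∈ smoothNumbers (k + 1)) : n < 210 := by
  have hn : 0 < n := hk₀.trans_le (le_of_choose_mem_smoothNumbers h)
  have hpow : ∀ k ∈ Ico 1 37, k ^ k < 210 ^ (k - π k) := by decide +kernel
  exact lt_of_pow_lt_pow_left₀ (k - π k) (by norm_num) <|
    (pow_sub_primeCounting_le_of_mem_smoothNumbers hn h).trans_lt (hpow k (mem_Ico.2 ⟨hk₀, hk⟩))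

lemma pow_le_pow_succ_of_mem_smoothNumbers {c : ℕ} (hk : 0 < k)
    (hc : (c + 1) * π k ≤ k) (h : n.choose k ∈ smoothNumbers (k + 1)) : n ^ c ≤ k ^ (c + 1) := by
  have hn : 0 < n := hk.trans_le (le_of_choose_mem_smoothNumbers h)
  have hexp : c * k ≤ (k - π k) * (c + 1) := by
    rw [Nat.sub_mul, mul_comm (π k), mul_add_one, mul_comm k c]
    omega
  refine (Nat.pow_le_pow_iff_left hk.ne').1 ?_
  calc (n ^ c) ^ k = n ^ (c * k) := (pow_mul ..).symm
    _ ≤ n ^ ((k - π k) * (c + 1)) := Nat.pow_le_pow_right hn hexp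
    _ = (n ^ (k - π k)) ^ (c + 1) := pow_mul ..
    _ ≤ (k ^ k) ^ (c + 1) :=
        Nat.pow_le_pow_left (pow_sub_primeCounting_le_of_mem_smoothNumbers hn h) _
    _ = (k ^ (c + 1)) ^ k := pow_right_comm ..

lemma four_pow_le_of_two_mul_lt_five_mul (hk : 3 ≤ k) (hn : 2 * k ≤ n) (hn5 : 2 * n < 5 * k)
    (h : n.choose k ∈ smoothNumbers (k + 1)) : 4 ^ k ≤ (2 * k * n ^ π (sqrt n)) ^ 6 := by
  have hlarge : ∀ p, p.Prime → sqrt n < p → p ∣ n.choose k → p ≤ n / 3 := by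
    intro p hp _ hdvd
    by_contra! hpn
    have hpk : p ≤ k := Nat.lt_succ_iff.1 (mem_smoothNumbers'.1 h p hp hdvd)
    have hpos := hp.factorization_pos_of_dvd (choose_ne_zero (by omega)) hdvd
    exact hpos.ne' (factorization_choose_of_lt_three_mul (by omega) hpk (by omega) (by omega))
  have hbound : 4 ^ k ≤ 2 * k * n ^ π (sqrt n) * 4 ^ (n / 3) :=
    calc 4 ^ k ≤ 2 * k * centralBinom k := four_pow_le_two_mul_self_mul_centralBinom k (by omega)
      _ ≤ 2 * k * n.choose k := by gcongr; exact choose_le_choose k hn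
      _ ≤ 2 * k * (n ^ π (sqrt n) * 4 ^ (n / 3)) := by
          gcongr
          refine (choose_le_pow_mul_primorial (by omega) (by omega) hlarge).trans ?_
          gcongr
          exact primorial_le_four_pow _
      _ = 2 * k * n ^ π (sqrt n) * 4 ^ (n / 3) := (mul_assoc ..).symm
  refine Nat.le_of_mul_le_mul_right (c := 4 ^ (5 * k)) ?_ (by positivity)
  calc 4 ^ k * 4 ^ (5 * k) = (4 ^ k) ^ 6 := by ring
    _ ≤ (2 * k * n ^ π (sqrt n) * 4 ^ (n / 3)) ^ 6 := by gcongr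
    _ = (2 * k * n ^ π (sqrt n)) ^ 6 * 4 ^ (n / 3 * 6) := by rw [mul_pow, ← pow_mul]
    _ ≤ (2 * k * n ^ π (sqrt n)) ^ 6 * 4 ^ (5 * k) :=
        Nat.mul_le_mul_left _ (Nat.pow_le_pow_right (by norm_num) (by omega))

lemma four_pow_le_of_five_mul_le_two_mul (hk : 0 < k) (hn5 : 5 * k ≤ 2 * n)
    (h : n.choose k ∈ smoothNumbers (k + 1)) : 4 ^ k ≤ 4 * (2 * k * n ^ π (sqrt n)) ^ 6 := by
  set t := k / 2
  set M := 2 * k * n ^ π (sqrt n)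
  have hchoose : n.choose k ≤ n ^ π (sqrt n) * 4 ^ k := by
    refine (choose_le_pow_mul_primorial (u := k) (by omega) (by omega) fun p hp _ hdvd ↦
      Nat.lt_succ_iff.1 (mem_smoothNumbers'.1 h p hp hdvd)).trans ?_
    gcongr
    exact primorial_le_four_pow _
  have hfive : 5 ^ t ≤ 3 ^ t * M := by
    refine Nat.le_of_mul_le_mul_right (c := 4 ^ k) ?_ (by positivity)
    calc 5 ^ t * 4 ^ k
        ≤ 5 ^ t * (2 * k * centralBinom k) := by
          gcongr; exact four_pow_le_two_mul_self_mul_centralBinom k hk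
      _ = 2 * k * (5 ^ t * centralBinom k) := by ring
      _ ≤ 2 * k * (3 ^ t * (2 * k + t).choose k) :=
          Nat.mul_le_mul_left _ (five_pow_mul_centralBinom_le k t (by omega))
      _ ≤ 2 * k * (3 ^ t * (n ^ π (sqrt n) * 4 ^ k)) := by
          gcongr; exact (choose_le_choose k (by omega)).trans hchoose
      _ = 3 ^ t * M * 4 ^ k := by ring
  have hfour : 4 ^ t ≤ M ^ 3 := by
    refine Nat.le_of_mul_le_mul_left (c := (3 ^ 3) ^ t) ?_ (by positivity)
    calc (3 ^ 3) ^ t * 4 ^ t = (3 ^ 3 * 4) ^ t := (mul_pow ..).symm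
      _ ≤ (5 ^ 3) ^ t := by gcongr; norm_num
      _ = (5 ^ t) ^ 3 := pow_right_comm ..
      _ ≤ (3 ^ t * M) ^ 3 := by gcongr
      _ = (3 ^ 3) ^ t * M ^ 3 := by rw [mul_pow, pow_right_comm]
  calc 4 ^ k ≤ 4 ^ (1 + t * 2) := Nat.pow_le_pow_right (by norm_num) (by omega)
    _ = 4 * (4 ^ t) ^ 2 := by rw [pow_add, pow_one, pow_mul]
    _ ≤ 4 * (M ^ 3) ^ 2 := by gcongr
    _ = 4 * M ^ 6 := by rw [← pow_mul]

lemma choose_notMem_smoothNumbers_of_lt_37 (hk₀ : 0 < k) (hk : k < 37) (hn : 2 * k ≤ n) :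
    n.choose k ∉ smoothNumbers (k + 1) := by
  intro h
  have hn210 : n < 210 := lt_210_of_mem_smoothNumbers hk₀ hk h
  have hprime : ∀ p ∈ [37, 31, 43, 17, 11, 13, 7, 19, 5, 3], p.Prime := by norm_num
  have hsearch : ∀ k ∈ Ico 1 37, ∀ n ∈ Ico (2 * k) 210, n ^ (k - π k) ≤ k ^ k →
      ∃ p ∈ [37, 31, 43, 17, 11, 13, 7, 19, 5, 3], k < p ∧ n % p < k := by decide +kernel
  obtain ⟨p, hp, hkp, hmod⟩ := hsearch k (mem_Ico.2 ⟨hk₀, hk⟩) n (mem_Ico.2 ⟨hn, hn210⟩)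
    (pow_sub_primeCounting_le_of_mem_smoothNumbers (by omega) h)
  exact choose_notMem_smoothNumbers_of_mod_lt (hprime p hp) hkp hmod h

lemma choose_notMem_smoothNumbers_of_thirteen_cubed_le (hk : 13 ^ 3 ≤ k) (hn : 2 * k ≤ n) :
    n.choose k ∉ smoothNumbers (k + 1) := by
  intro h
  have hnk : n ^ 3 ≤ k ^ 4 := pow_le_pow_succ_of_mem_smoothNumbers (by omega)
    (four_mul_primeCounting_le (by omega)) h
  refine (four_mul_pow_lt_four_pow hk hn hnk).not_ge ?_
  rcases lt_or_ge (2 * n) (5 * k) with hn5 | hn5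
  · exact (four_pow_le_of_two_mul_lt_five_mul (by omega) hn hn5 h).trans (by omega)
  · exact four_pow_le_of_five_mul_le_two_mul (by omega) hn5 h

theorem choose_notMem_smoothNumbers (hk : 0 < k) (hn : 2 * k ≤ n) :
    n.choose k ∉ smoothNumbers (k + 1) := by
  intro h
  rcases lt_or_ge k 37 with hk37 | hk37
  · exact choose_notMem_smoothNumbers_of_lt_37 hk hk37 hn h
  rcases lt_or_ge k 217 with hk217 | hk217
  · have hnk : n ^ 2 ≤ k ^ 3 := pow_le_pow_succ_of_mem_smoothNumbers hk
      (three_mul_primeCounting_le hk37) h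
    obtain ⟨p, hp, hpn, hnp⟩ := exists_prime_le_lt_add_of_sq_le_cube hnk (by omega) hk217
    exact choose_notMem_smoothNumbers_of_prime_le_lt_add hp hpn hnp hn h
  rcases lt_or_ge k (13 ^ 3) with hk13 | hk13
  · have hnk : n ^ 3 ≤ k ^ 4 := pow_le_pow_succ_of_mem_smoothNumbers hk
      (four_mul_primeCounting_le hk217) h
    obtain ⟨p, hp, hpn, hnp⟩ := exists_prime_le_lt_add_of_cube_le_pow_four hnk (by omega) hk13
    exact choose_notMem_smoothNumbers_of_prime_le_lt_add hp hpn hnp hn h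
  · exact choose_notMem_smoothNumbers_of_thirteen_cubed_le hk13 hn h

end Smooth

end SylvesterSchur

/-- **Sylvester–Schur theorem.** Let `m ≥ k` be positive integers. Then there is a
prime `p ≥ k + 1` dividing one of the integers `m + 1, m + 2, …, m + k`. -/
theorem sylvester_schur (m k : ℕ) (hm : 0 < m) (hk : 0 < k) (hkm : k ≤ m) :
    ∃ p : ℕ, p.Prime ∧ k + 1 ≤ p ∧ ∃ i, 1 ≤ i ∧ i ≤ k ∧ p ∣ (m + i) := by
  have hrough : (m + k).choose k ∉ Nat.smoothNumbers (k + 1) :=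
    SylvesterSchur.choose_notMem_smoothNumbers hk (by omega)
  simp only [Nat.mem_smoothNumbers', not_forall, not_lt] at hrough
  obtain ⟨p, hp, hdvd, hkp⟩ := hrough
  have hmod : (m + k) % p < k := (SylvesterSchur.dvd_choose_iff_mod_lt hp hkp).1 hdvd
  refine ⟨p, hp, hkp, k - (m + k) % p, by omega, Nat.sub_le .., ?_⟩
  rw [← Nat.add_sub_assoc hmod.le]
  exact Nat.dvd_sub_mod _
end

section
/- Let p be a prime and s ≥ 1. Let m_1 < m_2 < … < m_s be integers with m_1 > 0, and let c_1, …, c_s be integers with 0 < c_i < p for each i. Set n = c_1·p^{m_1} + c_2·p^{m_2} + … + c_s·p^{m_s}, z_0 = 0 and z_i = c_1·p^{m_1} + … + c_i·p^{m_i} for 1 ≤ i ≤ s. Then for each i with 1 ≤ i ≤ s, one has v_p((n − z_{i−1})!) − v_p((n − z_i)!) = c_i·(p^{m_i} − 1)/(p − 1). Equivalently, the slope of the i-th edge of the Newton polygon formed by the points (z, v_p(n!/(n−z)!)) is (p^{m_i} − 1)/(p^{m_i}·(p − 1)). -/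
/-!
One has `v_p((p * n)!) = v_p(n!) + n`, while adding `c < p` to a multiple of `p` does not change
the valuation of its factorial. Iterating the first fact `k` times shows that
adding `c * p ^ k` to a multiple of `p ^ (k + 1)` raises the valuation of the factorial by
`c * (1 + p + ⋯ + p ^ (k - 1))`. Since the exponents increase, `n - z_i` is a multiple of
`p ^ (m_i + 1)`, and `n - z_{i-1}` exceeds it by exactly `c_i * p ^ m_i`.
-/

section FactorialValuation

variable {p : ℕ} [Fact p.Prime]

theorem padicValNat_factorial_pow_mul (k n : ℕ) :
    padicValNat p (p ^ k * n).factorial =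
      padicValNat p n.factorial + n * ∑ i ∈ Finset.range k, p ^ i := by
  induction k with
  | zero => simp
  | succ k ih =>
    rw [pow_succ', mul_assoc, padicValNat_factorial_mul, ih, Finset.sum_range_succ]
    ring

theorem padicValNat_factorial_add_mul_pow {k N c : ℕ} (hN : p ^ (k + 1) ∣ N) (hc : c < p) :
    padicValNat p (N + c * p ^ k).factorial =
      padicValNat p N.factorial + c * ∑ i ∈ Finset.range k, p ^ i := by
  obtain ⟨q, rfl⟩ := hN
  have factor_add : p ^ (k + 1) * q + c * p ^ k = p ^ k * (p * q + c) := by ring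
  have factor : p ^ (k + 1) * q = p ^ k * (p * q) := by ring
  rw [factor_add, factor, padicValNat_factorial_pow_mul, padicValNat_factorial_pow_mul,
    padicValNat_factorial_mul_add q hc]
  ring

end FactorialValuation

theorem mul_pow_sub_one_div_sub_one {R : Type*} [Ring R] [Div R] [MulDivCancelClass R] {x : R}
    (hx : x ≠ 1) (c : R) (k : ℕ) :
    c * (x ^ k - 1) / (x - 1) = c * ∑ i ∈ Finset.range k, x ^ i := by
  rw [← geom_sum_mul, ← mul_assoc, mul_div_cancel_right₀ _ (sub_ne_zero.mpr hx)]

theorem sum_Icc_one_tsub_sum_Icc_one {M : Type*} [AddCommMonoid M] [PartialOrder M]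
    [IsOrderedCancelAddMonoid M] [Sub M] [OrderedSub M] (f : ℕ → M) {k s : ℕ} (hks : k ≤ s) :
    ∑ j ∈ Finset.Icc 1 s, f j - ∑ j ∈ Finset.Icc 1 k, f j = ∑ j ∈ Finset.Ioc k s, f j :=
  tsub_eq_of_eq_add_rev (Finset.sum_Ioc_consecutive f (Nat.zero_le k) hks).symm

/-- Let `p` be a prime and `n = c_1·p^{m_1} + ⋯ + c_s·p^{m_s}` with
`0 < m_1 < ⋯ < m_s` and `0 < c_i < p`. With `z_0 = 0` and
`z_i = c_1·p^{m_1} + ⋯ + c_i·p^{m_i}`, for each `1 ≤ i ≤ s` one has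
`v_p((n - z_{i-1})!) - v_p((n - z_i)!) = c_i·(p^{m_i} - 1)/(p - 1)`. -/
theorem newton_polygon_slopes (p : ℕ) (hp : p.Prime) (s : ℕ) (hs : 1 ≤ s)
    (m c : ℕ → ℕ) (hm1 : 0 < m 1)
    (hmono : ∀ i j, 1 ≤ i → i < j → j ≤ s → m i < m j)
    (hc : ∀ i, 1 ≤ i → i ≤ s → 0 < c i ∧ c i < p)
    (z : ℕ → ℕ) (hz : ∀ i, z i = ∑ j ∈ Finset.Icc 1 i, c j * p ^ m j)
    (n : ℕ) (hn : n = z s) :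
    ∀ i, 1 ≤ i → i ≤ s →
      (padicValNat p (n - z (i - 1)).factorial : ℤ)
        - (padicValNat p (n - z i).factorial : ℤ)
      = (c i : ℤ) * ((p : ℤ) ^ m i - 1) / ((p : ℤ) - 1) := by
  intro i hi his
  have := Fact.mk hp
  have tail_eq {k : ℕ} (hk : k ≤ s) : n - z k = ∑ j ∈ Finset.Ioc k s, c j * p ^ m j := by
    rw [hn, hz, hz, sum_Icc_one_tsub_sum_Icc_one _ hk]
  have tail_dvd : p ^ (m i + 1) ∣ n - z i := by
    rw [tail_eq his]
    refine Finset.dvd_sum fun j hj ↦ Dvd.dvd.mul_left (pow_dvd_pow p ?_) (c j)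
    obtain ⟨hij, hjs⟩ := Finset.mem_Ioc.mp hj
    exact hmono i j hi hij hjs
  have tail_pred : n - z (i - 1) = n - z i + c i * p ^ m i := by
    rw [tail_eq his, tail_eq ((Nat.sub_le i 1).trans his), Finset.sum_Ioc_add_eq_sum_Icc his,
      ← Finset.Icc_add_one_left_eq_Ioc, Nat.sub_add_cancel hi]
  rw [tail_pred, padicValNat_factorial_add_mul_pow tail_dvd (hc i hi his).2,
    mul_pow_sub_one_div_sub_one (by exact_mod_cast hp.ne_one)]
  push_cast
  ring
end

section
/- Let n ≥ 2 be an integer, q a prime dividing n, and let φ ∈ ℤ[x] be a monic polynomial whose reduction modulo q is irreducible in 𝔽_q[x]. Let a_0(x), …, a_{n−1}(x) ∈ ℤ[x] be polynomials each of degree strictly less than deg φ with a_0(x) ≠ 0, and let a_n be an integer not divisible by q. Then the polynomial F(x) = Σ_{i=0}^{n−1} (n!/i!)·a_i(x)·φ(x)^i + a_n·φ(x)^n has no divisor g ∈ ℤ[x] with 0 < deg g < deg φ. -/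
open Polynomial

/-!
Modulo `q`, `F` becomes a nonzero constant times a power of the prime polynomial `φ`, so every
divisor of `F` reduces to a constant times a power of `φ`. The leading coefficient of `F` is that of
its top term and survives reduction, hence so does that of every divisor of `F`: reduction keeps
the degree of a divisor, and that degree is therefore a multiple of `deg φ`.
-/

lemma self_dvd_factorial_div_factorial {n i : ℕ} (hi : i < n) :
    n ∣ n.factorial / i.factorial := by
  rw [← Nat.mul_factorial_pred (Nat.ne_zero_of_lt hi),
    Nat.mul_div_assoc _ (Nat.factorial_dvd_factorial (Nat.le_sub_one_of_lt hi))]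
  exact dvd_mul_right _ _

lemma intCastRingHom_factorial_div_factorial_eq_zero {q n i : ℕ} (hqn : q ∣ n) (hi : i < n) :
    Int.castRingHom (ZMod q) ((n.factorial / i.factorial : ℕ) : ℤ) = 0 := by
  rw [map_natCast, ZMod.natCast_eq_zero_iff]
  exact hqn.trans (self_dvd_factorial_div_factorial hi)

section

variable {R : Type*}

lemma degree_sum_mul_pow_lt [Semiring R] [Nontrivial R] {φ : R[X]} (hφ : φ.Monic) {a : ℕ → R[X]}
    {n : ℕ} (ha : ∀ i < n, (a i).degree < φ.degree) :
    (∑ i ∈ Finset.range n, a i * φ ^ i).degree < (φ ^ n).degree := by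
  have degree_pow_ne_bot (k : ℕ) : (φ ^ k).degree ≠ ⊥ := degree_ne_bot.mpr (hφ.pow k).ne_zero
  refine (degree_sum_le _ _).trans_lt ?_
  refine (Finset.sup_lt_iff (bot_lt_iff_ne_bot.mpr (degree_pow_ne_bot n))).mpr fun i hi ↦ ?_
  obtain ⟨k, rfl⟩ : ∃ k, n = i + 1 + k := exists_add_of_le (Finset.mem_range.mp hi)
  calc (a i * φ ^ i).degree
    _ = (a i).degree + (φ ^ i).degree := (hφ.pow i).degree_mul
    _ < φ.degree + (φ ^ i).degree :=
      WithBot.add_lt_add_right (degree_pow_ne_bot i) (ha i (Finset.mem_range.mp hi))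
    _ = (φ ^ (i + 1)).degree := by rw [pow_succ', (hφ.pow i).degree_mul]
    _ ≤ (φ ^ (i + 1)).degree + (φ ^ k).degree :=
      le_add_of_nonneg_right (zero_le_degree_iff.mpr (hφ.pow k).ne_zero)
    _ = (φ ^ (i + 1 + k)).degree := by rw [pow_add φ (i + 1), (hφ.pow k).degree_mul]

lemma leadingCoeff_sum_mul_pow_add_C_mul_pow [Semiring R] {φ : R[X]} (hφ : φ.Monic)
    {a : ℕ → R[X]} {n : ℕ} (ha : ∀ i < n, (a i).degree < φ.degree) {b : R} (hb : b ≠ 0) :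
    (∑ i ∈ Finset.range n, a i * φ ^ i + C b * φ ^ n).leadingCoeff = b := by
  have : Nontrivial R := ⟨b, 0, hb⟩
  have degree_top : (C b * φ ^ n).degree = (φ ^ n).degree := by
    rw [(hφ.pow n).degree_mul, degree_C hb, zero_add]
  rw [leadingCoeff_add_of_degree_lt (degree_top ▸ degree_sum_mul_pow_lt hφ ha),
    leadingCoeff_mul_monic (hφ.pow n), leadingCoeff_C]

lemma natDegree_map_of_dvd_of_leadingCoeff_ne_zero [CommSemiring R] [NoZeroDivisors R]
    {S : Type*} [CommSemiring S] (f : R →+* S) {g p : R[X]} (hgp : g ∣ p)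
    (hp : f p.leadingCoeff ≠ 0) : (g.map f).natDegree = g.natDegree :=
  natDegree_map_of_leadingCoeff_ne_zero f <|
    ne_zero_of_dvd_ne_zero hp (map_dvd f (leadingCoeff_dvd_leadingCoeff hgp))

lemma natDegree_dvd_natDegree_of_dvd_C_mul_prime_pow [CommRing R] [IsDomain R] {ψ g : R[X]}
    (hψ : Prime ψ) {b : R} (hb : b ≠ 0) {n : ℕ} (hg : g ∣ C b * ψ ^ n) :
    ψ.natDegree ∣ g.natDegree := by
  obtain ⟨h, hgh⟩ := hg
  obtain ⟨i, -, c, d, -, hcd, rfl, -⟩ := mul_eq_mul_prime_pow hψ hgh.symm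
  have hc : c ∣ C b := Dvd.intro d hcd.symm
  have hc_natDegree : c.natDegree = 0 :=
    Nat.le_zero.mp (natDegree_C b ▸ natDegree_le_of_dvd hc (C_ne_zero.mpr hb))
  rw [natDegree_mul (ne_zero_of_dvd_ne_zero (C_ne_zero.mpr hb) hc) (pow_ne_zero i hψ.ne_zero),
    hc_natDegree, zero_add, natDegree_pow]
  exact dvd_mul_left _ _

end

theorem no_small_degree_factor_general {R S : Type*} [CommSemiring R] [NoZeroDivisors R]
    [CommRing S] [IsDomain S] (f : R →+* S) {φ : R[X]} (hφ : φ.Monic) (hφprime : Prime (φ.map f))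
    {n : ℕ} {a : ℕ → R[X]} (hdeg : ∀ i < n, (a i).degree < φ.degree)
    {c : ℕ → R} (hc : ∀ i < n, f (c i) = 0) {b : R} (hb : f b ≠ 0) {g : R[X]}
    (hg : g ∣ ∑ i ∈ Finset.range n, C (c i) * a i * φ ^ i + C b * φ ^ n) :
    φ.natDegree ∣ g.natDegree := by
  have degree_coeff_lt (i : ℕ) (hi : i < n) : (C (c i) * a i).degree < φ.degree :=
    smul_eq_C_mul (p := a i) (c i) ▸ (degree_smul_le (c i) (a i)).trans_lt (hdeg i hi)
  have map_lower_terms : (∑ i ∈ Finset.range n, C (c i) * a i * φ ^ i).map f = 0 := by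
    rw [Polynomial.map_sum]
    refine Finset.sum_eq_zero fun i hi ↦ ?_
    rw [Polynomial.map_mul, Polynomial.map_mul, map_C, hc i (Finset.mem_range.mp hi), C_0,
      zero_mul, zero_mul]
  have map_dvd_top : g.map f ∣ C (f b) * φ.map f ^ n := by
    simpa only [Polynomial.map_add, map_lower_terms, zero_add, Polynomial.map_mul, map_C,
      Polynomial.map_pow] using Polynomial.map_dvd f hg
  have natDegree_map_g : (g.map f).natDegree = g.natDegree := by
    refine natDegree_map_of_dvd_of_leadingCoeff_ne_zero f hg ?_
    rwa [leadingCoeff_sum_mul_pow_add_C_mul_pow hφ degree_coeff_lt (ne_zero_of_map hb)]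
  rw [← hφ.natDegree_map f, ← natDegree_map_g]
  exact natDegree_dvd_natDegree_of_dvd_C_mul_prime_pow hφprime hb map_dvd_top

/-- Step I of the proof of the main theorem: if `q` is a prime dividing `n`, `φ` is monic
and irreducible mod `q`, each `a i` has degree `< deg φ` with `a 0 ≠ 0`, and `q ∤ an`,
then `F = ∑_{i<n} (n!/i!)·(a i)·φ^i + an·φ^n` has no divisor `g ∈ ℤ[x]` with
`0 < deg g < deg φ`. -/
theorem no_small_degree_factor (n : ℕ) (hn : 2 ≤ n) (q : ℕ) (hq : q.Prime) (hqn : q ∣ n)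
    (φ : ℤ[X]) (hφmonic : φ.Monic)
    (hφirr : Irreducible (φ.map (Int.castRingHom (ZMod q))))
    (a : ℕ → ℤ[X]) (an : ℤ)
    (hdeg : ∀ i < n, (a i).degree < φ.degree)
    (ha0 : a 0 ≠ 0)
    (han : ¬ (q : ℤ) ∣ an) :
    ¬ ∃ g : ℤ[X], g ∣ (∑ i ∈ Finset.range n,
          C ((n.factorial / i.factorial : ℕ) : ℤ) * a i * φ ^ i
        + C an * φ ^ n) ∧
      0 < g.natDegree ∧ g.natDegree < φ.natDegree := by
  have : Fact q.Prime := ⟨hq⟩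
  rintro ⟨g, hg, hg0, hgφ⟩
  have natDegree_dvd : φ.natDegree ∣ g.natDegree :=
    no_small_degree_factor_general (Int.castRingHom (ZMod q)) hφmonic hφirr.prime hdeg
      (fun _ ↦ intCastRingHom_factorial_div_factorial_eq_zero hqn)
      (mt (ZMod.intCast_zmod_eq_zero_iff_dvd an q).mp han) hg
  exact (Nat.le_of_dvd hg0 natDegree_dvd).not_gt hgφ
end

section
/- Let p be a prime, n ≥ 2 an integer, and let φ ∈ ℤ[x] be a monic polynomial whose reduction modulo p is irreducible in 𝔽_p[x]. Let M ∈ ℤ[x] have degree strictly less than n·deg φ and suppose the reduction of φ modulo p does not divide the reduction of M modulo p in 𝔽_p[x]. Let k be the largest integer not exceeding n/2. Then the polynomial f(x) = φ(x)^n + p·M(x) has no factor in ℤ[x] whose degree lies in the interval [deg φ, (k+1)·deg φ). -/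
open Polynomial

/-!
The polynomial `f = φ ^ n + p * M` is irreducible, so all its factors have degree `0` or
`n * deg φ`. Irreducibility is an instance of the generalized Eisenstein criterion: `f` is monic,
it reduces to `φ ^ n` modulo `p`, and its remainder modulo `φ` is `p` times that of `M`. The latter
is nonzero modulo `p ^ 2` exactly because `φ` does not divide `M` modulo `p`.
-/

section CommRing

variable {R : Type*} [CommRing R]

theorem pow_add_C_mul_modByMonic {φ : R[X]} (hφ : φ.Monic) {n : ℕ} (hn : n ≠ 0) (ϖ : R)
    (M : R[X]) : (φ ^ n + C ϖ * M) %ₘ φ = C ϖ * (M %ₘ φ) := by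
  rw [add_modByMonic, (modByMonic_eq_zero_iff_dvd hφ).2 (dvd_pow_self φ hn), zero_add,
    ← smul_eq_C_mul, smul_modByMonic, smul_eq_C_mul]

variable [Nontrivial R] {φ M : R[X]} {n : ℕ}

theorem degree_C_mul_lt_degree_pow (hφ : φ.Monic)
    (hM : M.degree < ((n * φ.natDegree : ℕ) : WithBot ℕ)) (ϖ : R) :
    (C ϖ * M).degree < (φ ^ n).degree :=
  calc (C ϖ * M).degree = (ϖ • M).degree := by rw [smul_eq_C_mul]
    _ ≤ M.degree := degree_smul_le ϖ M
    _ < ((n * φ.natDegree : ℕ) : WithBot ℕ) := hM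
    _ = (φ ^ n).degree := by
      rw [degree_eq_natDegree (hφ.pow n).ne_zero, hφ.natDegree_pow]

theorem monic_pow_add_C_mul (hφ : φ.Monic)
    (hM : M.degree < ((n * φ.natDegree : ℕ) : WithBot ℕ)) (ϖ : R) :
    (φ ^ n + C ϖ * M).Monic :=
  (hφ.pow n).add_of_left (degree_C_mul_lt_degree_pow hφ hM ϖ)

theorem natDegree_pow_add_C_mul (hφ : φ.Monic)
    (hM : M.degree < ((n * φ.natDegree : ℕ) : WithBot ℕ)) (ϖ : R) :
    (φ ^ n + C ϖ * M).natDegree = n * φ.natDegree := by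
  rw [natDegree_add_eq_left_of_degree_lt (degree_C_mul_lt_degree_pow hφ hM ϖ), hφ.natDegree_pow]

end CommRing

section IsDomain

variable {R : Type*} [CommRing R] [IsDomain R]

theorem natDegree_eq_zero_or_eq_of_dvd_irreducible {f g : R[X]} (hf : Irreducible f)
    (hgf : g ∣ f) : g.natDegree = 0 ∨ g.natDegree = f.natDegree :=
  (hf.dvd_iff.1 hgf).imp natDegree_eq_zero_of_isUnit fun hfg =>
    natDegree_eq_of_degree_eq (degree_eq_degree_of_associated hfg.symm)

theorem map_mk_ker_sq_C_mul_eq_zero_iff {S : Type*} [Semiring S] {π : R →+* S} {ϖ : R}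
    (hϖ : ϖ ≠ 0) (hker : RingHom.ker π = Ideal.span {ϖ}) (f : R[X]) :
    (C ϖ * f).map (Ideal.Quotient.mk (RingHom.ker π ^ 2)) = 0 ↔ f.map π = 0 := by
  have mul_mem_iff (a : R) : ϖ * a ∈ RingHom.ker π ^ 2 ↔ a ∈ RingHom.ker π := by
    rw [hker, Ideal.span_singleton_pow, Ideal.mem_span_singleton, Ideal.mem_span_singleton, sq,
      mul_dvd_mul_iff_left hϖ]
  simp only [Polynomial.ext_iff, coeff_map, coeff_C_mul, coeff_zero,
    Ideal.Quotient.eq_zero_iff_mem, mul_mem_iff, RingHom.mem_ker]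

variable {K : Type*} [Field K] {π : R →+* K} {ϖ : R} {φ M : R[X]} {n : ℕ}

theorem irreducible_pow_add_C_mul (hϖ : ϖ ≠ 0) (hker : RingHom.ker π = Ideal.span {ϖ})
    (hφ : φ.Monic) (hφirr : Irreducible (φ.map π))
    (hM : M.degree < ((n * φ.natDegree : ℕ) : WithBot ℕ)) (hndvd : ¬ φ.map π ∣ M.map π) :
    Irreducible (φ ^ n + C ϖ * M) := by
  let : Algebra R K := π.toAlgebra
  have hmonic : (φ ^ n + C ϖ * M).Monic := monic_pow_add_C_mul hφ hM ϖ
  have hπϖ : π ϖ = 0 := by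
    rw [← RingHom.mem_ker, hker]
    exact Ideal.mem_span_singleton_self ϖ
  have hM0 : M ≠ 0 := by
    rintro rfl
    simp at hndvd
  have hpos : 0 < n * φ.natDegree := by
    exact_mod_cast (zero_le_degree_iff.2 hM0).trans_lt hM
  refine generalizedEisenstein (K := K) (p := n) hφirr hφ hmonic.isPrimitive ?_ ?_ ?_ ?_
  · rwa [natDegree_pow_add_C_mul hφ hM]
  · simp [hmonic.leadingCoeff]
  · simp [hmonic.leadingCoeff, RingHom.algebraMap_toAlgebra, hπϖ]
  · rwa [pow_add_C_mul_modByMonic hφ (Nat.pos_of_mul_pos_right hpos).ne',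
      RingHom.algebraMap_toAlgebra, Ne, map_mk_ker_sq_C_mul_eq_zero_iff hϖ hker,
      map_modByMonic π hφ, modByMonic_eq_zero_iff_dvd (hφ.map π)]

theorem schonemann_no_factor_general (hϖ : ϖ ≠ 0) (hker : RingHom.ker π = Ideal.span {ϖ})
    (hφ : φ.Monic) (hφirr : Irreducible (φ.map π))
    (hM : M.degree < ((n * φ.natDegree : ℕ) : WithBot ℕ)) (hndvd : ¬ φ.map π ∣ M.map π)
    {g : R[X]} (hg : g ∣ φ ^ n + C ϖ * M) :
    ¬ (0 < g.natDegree ∧ g.natDegree < n * φ.natDegree) := by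
  have hirr := irreducible_pow_add_C_mul hϖ hker hφ hφirr hM hndvd
  have hdeg := natDegree_eq_zero_or_eq_of_dvd_irreducible hirr hg
  rw [natDegree_pow_add_C_mul hφ hM] at hdeg
  lia

end IsDomain

/-- Let `p` be a prime, `n ≥ 2`, and `φ ∈ ℤ[x]` monic and irreducible mod `p`. Let
`M ∈ ℤ[x]` have degree `< n·deg φ` with reduction mod `p` not divisible by that of `φ`.
Then, with `k = ⌊n/2⌋`, the polynomial `φ^n + p·M` has no factor in `ℤ[x]` of degree
in the interval `[deg φ, (k+1)·deg φ)`. -/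
theorem schonemann_no_factor (p : ℕ) (hp : p.Prime) (n : ℕ) (hn : 2 ≤ n)
    (φ M : ℤ[X]) (hφmonic : φ.Monic)
    (hφirr : Irreducible (φ.map (Int.castRingHom (ZMod p))))
    (hM : M.degree < ((n * φ.natDegree : ℕ) : WithBot ℕ))
    (hnotdvd : ¬ (φ.map (Int.castRingHom (ZMod p))) ∣ (M.map (Int.castRingHom (ZMod p)))) :
    ∀ g : ℤ[X], g ∣ (φ ^ n + C (p : ℤ) * M) →
      ¬ (φ.natDegree ≤ g.natDegree ∧ g.natDegree < (n / 2 + 1) * φ.natDegree) := by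
  have : Fact p.Prime := ⟨hp⟩
  rintro g hg ⟨hle, hlt⟩
  have hφpos : 0 < φ.natDegree := hφirr.natDegree_pos.trans_le natDegree_map_le
  have hkn : (n / 2 + 1) * φ.natDegree ≤ n * φ.natDegree := Nat.mul_le_mul_right _ (by lia)
  exact schonemann_no_factor_general (mod_cast hp.ne_zero) (ZMod.ker_intCastRingHom p) hφmonic
    hφirr hM hnotdvd hg ⟨hφpos.trans_le hle, hlt.trans_le hkn⟩
end

section
/- Let n ≥ 2 be an integer, p a prime dividing n, and let m ≥ 1 be the exact power of p dividing n (i.e., p^m divides n and p^{m+1} does not). Let φ ∈ ℤ[x] be a monic polynomial whose reduction modulo p is irreducible in 𝔽_p[x]. Let a_0(x), a_1(x), …, a_{n−1}(x) ∈ ℤ[x] be polynomials each of degree strictly less than deg φ whose contents are all coprime to p. Then every irreducible factor of the polynomial F(x) = Σ_{i=0}^{n−1} (n!/i!)·a_i(x)·φ(x)^i + φ(x)^n over the field ℚ_p of p-adic numbers has degree divisible by p^m·deg φ. -/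
open Polynomial

/-!
Let `θ` be a root of an irreducible factor `g` of `F`, let `O` be the ring of integers of the field
generated by `θ`, and let `P` be a prime of `O` above `p`. Since `p` divides `n! / i!` for all
`i < n`, the equation `F(θ) = 0` gives `φ(θ) ∈ P`. Hence `φ` reduces to the minimal polynomial of
`θ` modulo `P`, so that `deg φ` divides the inertia degree `f(P)` and every `a_i(θ)` is a unit
at `P`.

At least two of the terms of `F(θ) = 0` attain the minimal valuation at `P`. By Legendre's formula
the valuation of the `i`-th term is, up to a positive factor and a constant, `e * s_p(i) - t * i`,
where `e` is the valuation of `p`, `s_p` is the sum of the base `p` digits and `t` depends only on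
the valuation of `φ(θ)`. A unit in the `k`-th digit thus costs `e - t * p ^ k`, and a tie is
possible only if this vanishes for some `k ≥ m`; then `p ^ m` divides `e`. The theorem follows by
summing `e(P) * f(P)` over all `P`.
-/

section DigitSum

variable {b : ℕ} (hb : 1 < b)
include hb

theorem sum_digits_mul_pow_add (q : ℕ) {k r : ℕ} (hr : r < b ^ k) :
    (b.digits (q * b ^ k + r)).sum = (b.digits q).sum + (b.digits r).sum := by
  rcases q.eq_zero_or_pos with rfl | hq
  · simp
  · have hlen : (b.digits r).length + (k - (b.digits r).length) = k :=
      Nat.add_sub_cancel' ((Nat.digits_length_le_iff hb r).2 hr)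
    have happend := Nat.digits_append_zeroes_append_digits (n := r)
      (k := k - (b.digits r).length) hb hq
    rw [hlen] at happend
    rw [show q * b ^ k + r = r + b ^ k * q by ring, ← happend]
    simp [add_comm]

theorem sum_digits_mul_pow (q k : ℕ) : (b.digits (q * b ^ k)).sum = (b.digits q).sum := by
  simpa using sum_digits_mul_pow_add hb q (pow_pos (zero_lt_one.trans hb) k)

theorem sum_digits_mod_add_sum_digits_div (r : ℕ) :
    r % b + (b.digits (r / b)).sum = (b.digits r).sum := by
  rcases r.eq_zero_or_pos with rfl | hr
  · simp
  · rw [Nat.digits_def' hb hr, List.sum_cons]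

theorem sum_digits_succ_le (k : ℕ) : (b.digits (k + 1)).sum ≤ (b.digits k).sum + 1 := by
  induction k using Nat.strong_induction_on with
  | _ k ih =>
    have hk := sum_digits_mod_add_sum_digits_div hb k
    have hk1 := sum_digits_mod_add_sum_digits_div hb (k + 1)
    by_cases hdvd : b ∣ k + 1
    · have hdiv : (k + 1) / b = k / b + 1 := Nat.succ_div_of_dvd hdvd
      have hmod : (k + 1) % b = 0 := Nat.mod_eq_zero_of_dvd hdvd
      have hkpos : 0 < k := by have := Nat.le_of_dvd k.succ_pos hdvd; lia
      have := ih (k / b) (Nat.div_lt_self hkpos hb)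
      rw [hdiv, hmod] at hk1
      lia
    · have hdiv : (k + 1) / b = k / b := Nat.succ_div_of_not_dvd hdvd
      have hmod : (k + 1) % b ≤ k % b + 1 := by
        rw [Nat.add_mod, Nat.mod_eq_of_lt hb]
        exact Nat.mod_le _ _
      rw [hdiv] at hk1
      lia

theorem le_pow_mul_sum_digits {k r : ℕ} (hr : r < b ^ (k + 1)) :
    r ≤ b ^ k * (b.digits r).sum := by
  induction k generalizing r with
  | zero =>
    rcases r.eq_zero_or_pos with rfl | hpos
    · simp
    · simp [Nat.digits_of_lt b r hpos.ne' (by simpa using hr)]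
  | succ k ih =>
    have hdiv : r / b < b ^ (k + 1) := by
      rwa [Nat.div_lt_iff_lt_mul (zero_lt_one.trans hb), ← pow_succ]
    calc r = r % b + b * (r / b) := (Nat.mod_add_div r b).symm
      _ ≤ b ^ (k + 1) * (r % b) + b * (b ^ k * (b.digits (r / b)).sum) := by
        gcongr
        · exact Nat.le_mul_of_pos_left _ (by positivity)
        · exact ih hdiv
      _ = b ^ (k + 1) * (r % b + (b.digits (r / b)).sum) := by ring
      _ = b ^ (k + 1) * (b.digits r).sum := by rw [sum_digits_mod_add_sum_digits_div hb]

theorem sum_digits_pos {r : ℕ} (hr : 0 < r) : 0 < (b.digits r).sum := by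
  have hle := le_pow_mul_sum_digits hb ((Nat.lt_pow_self hb).trans (Nat.pow_lt_pow_succ hb) :
    r < b ^ (r + 1))
  exact Nat.pos_of_mul_pos_left (hr.trans_le hle)

end DigitSum

/-- The function `k ↦ e * s_b(k) - t * k`, where `s_b` is the sum of the base `b` digits: each unit
in the `j`-th digit of `k` contributes `e - t * b ^ j`. For `b = p` prime it measures the valuations
of the terms of `∑ (n! / k!) u_k y ^ k`; see `sub_one_mul_sub_mul_padicValNat_factorial`. -/
def digitWeight (b : ℕ) (e t : ℤ) (k : ℕ) : ℤ := e * (b.digits k).sum - t * k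

section DigitWeight

variable {b : ℕ} {e t : ℤ} (hb : 1 < b)
include hb

theorem digitWeight_mul_pow_add (q : ℕ) {k r : ℕ} (hr : r < b ^ k) :
    digitWeight b e t (q * b ^ k + r) = digitWeight b e t (q * b ^ k) + digitWeight b e t r := by
  simp only [digitWeight, sum_digits_mul_pow_add hb q hr, sum_digits_mul_pow hb]
  push_cast
  ring

theorem digitWeight_succ_mul_pow_lt (he : 0 ≤ e) (ht : 0 < t) {k : ℕ} (hk : e < t * b ^ k)
    (q : ℕ) {r : ℕ} (hr : r < b ^ k) :
    digitWeight b e t ((q + 1) * b ^ k) < digitWeight b e t (q * b ^ k + r) := by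
  have hsucc : e * (b.digits (q + 1)).sum ≤ e * ((b.digits q).sum + 1) :=
    mul_le_mul_of_nonneg_left (mod_cast sum_digits_succ_le hb q) he
  have hr' : t * r < t * b ^ k := mul_lt_mul_of_pos_left (mod_cast hr) ht
  suffices t * r - t * b ^ k < e * (b.digits r).sum - e by
    simp only [digitWeight, sum_digits_mul_pow_add hb q hr, sum_digits_mul_pow hb, Nat.cast_add,
      Nat.cast_mul, Nat.cast_pow, Nat.cast_one]
    linarith
  rcases r.eq_zero_or_pos with rfl | hpos
  · simpa using hk
  · have : e * 1 ≤ e * (b.digits r).sum :=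
      mul_le_mul_of_nonneg_left (mod_cast sum_digits_pos hb hpos) he
    linarith

theorem digitWeight_pos (ht : 0 ≤ t) {k r : ℕ} (hk : t * b ^ k < e) (hr : r < b ^ (k + 1))
    (hpos : 0 < r) : 0 < digitWeight b e t r := by
  have hle : (r : ℤ) ≤ b ^ k * (b.digits r).sum := mod_cast le_pow_mul_sum_digits hb hr
  have hsum : (0 : ℤ) < (b.digits r).sum := mod_cast sum_digits_pos hb hpos
  refine sub_pos.2 ?_
  calc t * r ≤ t * (b ^ k * (b.digits r).sum) := mul_le_mul_of_nonneg_left hle ht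
    _ = t * b ^ k * (b.digits r).sum := by ring
    _ < e * (b.digits r).sum := mul_lt_mul_of_pos_right hk hsum

variable {n x : ℕ} (hx : IsMinOn (digitWeight b e t) (Set.Iic n) x)
include hx

theorem pos_of_isMinOn_digitWeight (he : 0 < e) (hpos : 0 < x) : 0 < t := by
  have hmin : e * (b.digits x).sum - t * x ≤ 0 := by
    simpa [digitWeight] using isMinOn_iff.1 hx 0 (Nat.zero_le n)
  have hsum : 0 < e * (b.digits x).sum := mul_pos he (mod_cast sum_digits_pos hb hpos)
  exact pos_of_mul_pos_left (by linarith : 0 < t * x) (Nat.cast_nonneg x)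

variable (hxn : x ≤ n)
include hxn

theorem div_pow_eq_of_isMinOn_digitWeight (he : 0 ≤ e) (ht : 0 < t) {k : ℕ}
    (hk : e < t * b ^ k) : x / b ^ k = n / b ^ k := by
  refine (Nat.div_le_div_right hxn).antisymm (not_lt.1 fun hlt ↦ ?_)
  have hle : (x / b ^ k + 1) * b ^ k ≤ n :=
    (Nat.mul_le_mul_right _ hlt).trans (Nat.div_mul_le_self n _)
  have := digitWeight_succ_mul_pow_lt hb he ht hk (x / b ^ k) (Nat.mod_lt x (by positivity))
  rw [Nat.div_add_mod'] at this
  exact (isMinOn_iff.1 hx _ hle).not_gt this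

theorem pow_dvd_of_isMinOn_digitWeight (ht : 0 ≤ t) {k : ℕ} (hk : t * b ^ k < e) :
    b ^ (k + 1) ∣ x := by
  by_contra hdvd
  have hmod : 0 < x % b ^ (k + 1) := Nat.emod_pos_of_not_dvd hdvd
  have hlt : x % b ^ (k + 1) < b ^ (k + 1) := Nat.mod_lt _ (by positivity)
  have hadd := digitWeight_mul_pow_add (e := e) (t := t) hb (x / b ^ (k + 1)) hlt
  rw [Nat.div_add_mod'] at hadd
  have hmin := isMinOn_iff.1 hx (x / b ^ (k + 1) * b ^ (k + 1))
    ((Nat.div_mul_le_self x _).trans hxn)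
  have := digitWeight_pos hb ht hk hlt hmod
  linarith

-- If no `e - t * b ^ l` with `m ≤ l` vanishes, the minimizer is forced: it has the digits of `n`
-- at the places where `e - t * b ^ l` is negative, and zeros where it is positive.
theorem exists_eq_mul_pow_of_isMinOn_digitWeight (he : 0 < e) {m y : ℕ} (hm : b ^ m ∣ n)
    (hy : IsMinOn (digitWeight b e t) (Set.Iic n) y) (hyn : y ≤ n) (hxy : x < y) :
    ∃ l ≥ m, e = t * b ^ l := by
  have ht : 0 < t := pos_of_isMinOn_digitWeight hb hy he (Nat.zero_lt_of_lt hxy)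
  have hlarge : ∃ k, e < t * b ^ k := by
    obtain ⟨k, hk⟩ := pow_unbounded_of_one_lt e (mod_cast hb : (1 : ℤ) < b)
    exact ⟨k, hk.trans_le (le_mul_of_one_le_left (by positivity) ht)⟩
  classical
  have hk : e < t * b ^ Nat.find hlarge := Nat.find_spec hlarge
  have hdiv : x / b ^ Nat.find hlarge = y / b ^ Nat.find hlarge :=
    (div_pow_eq_of_isMinOn_digitWeight hb hx hxn he.le ht hk).trans
      (div_pow_eq_of_isMinOn_digitWeight hb hy hyn he.le ht hk).symm
  have hmk : m < Nat.find hlarge := by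
    refine (Nat.lt_find_iff hlarge m).2 fun j hj hej ↦ hxy.not_ge (hyn.trans ?_)
    have := div_pow_eq_of_isMinOn_digitWeight hb hx hxn he.le ht hej
    calc n = n / b ^ j * b ^ j := (Nat.div_mul_cancel ((pow_dvd_pow b hj).trans hm)).symm
      _ = x / b ^ j * b ^ j := by rw [this]
      _ ≤ x := Nat.div_mul_le_self x _
  obtain ⟨l, hl⟩ := Nat.exists_eq_add_one_of_ne_zero (Nat.ne_zero_of_lt hmk)
  refine ⟨l, by lia, le_antisymm (not_lt.1 fun hlt ↦ hxy.ne ?_) ?_⟩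
  · rw [hl] at hdiv
    exact (Nat.div_left_inj (pow_dvd_of_isMinOn_digitWeight hb hx hxn ht.le hlt)
      (pow_dvd_of_isMinOn_digitWeight hb hy hyn ht.le hlt)).1 hdiv
  · exact not_lt.1 (Nat.find_min hlarge (by lia : l < Nat.find hlarge))

end DigitWeight

section Valuation

variable {O Γ : Type*} [CommRing O] [LinearOrderedCommGroupWithZero Γ] (v : Valuation O Γ)

theorem exists_ne_valuation_eq_of_sum_eq_zero {ι : Type*} {s : Finset ι} {f : ι → O}
    (hsum : ∑ i ∈ s, f i = 0) (hne : ∃ i ∈ s, v (f i) ≠ 0) :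
    ∃ i ∈ s, ∃ j ∈ s, i ≠ j ∧ v (f i) = v (f j) ∧ v (f i) ≠ 0 ∧ ∀ k ∈ s, v (f k) ≤ v (f i) := by
  classical
  obtain ⟨k, hk, hk0⟩ := hne
  obtain ⟨i, hi, hmax⟩ := s.exists_max_image (fun k ↦ v (f k)) ⟨k, hk⟩
  have hi0 : v (f i) ≠ 0 := ((zero_lt_iff.2 hk0).trans_le (hmax k hk)).ne'
  by_contra! hcon
  refine hi0 (.symm ?_)
  calc 0 = v (∑ k ∈ s, f k) := by rw [hsum, map_zero]
    _ = v (f i) := v.map_sum_eq_of_lt hi fun j hj ↦ by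
      obtain ⟨hjs, hji⟩ := Finset.mem_sdiff.1 hj
      refine (hmax j hjs).lt_of_ne fun heq ↦ ?_
      obtain ⟨k, hk, hlt⟩ := hcon i hi j hjs (fun h ↦ hji (by simp [h])) heq.symm hi0
      exact (hmax k hk).not_gt hlt

variable {v} {p : ℕ}

theorem valuation_natCast_eq_one_of_coprime (hv : v p < 1) {N : ℕ} (hN : p.Coprime N) :
    v (N : O) = 1 := by
  have hmul (z : ℤ) {x : O} (hx : v x < 1) : v (z * x) < 1 := by
    rw [map_mul]
    exact mul_lt_one_of_nonneg_of_lt_one_right (intCast_mem v.integer z) zero_le hx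
  obtain ⟨x, y, hxy⟩ := Nat.isCoprime_iff_coprime.2 hN
  have hone : (x : O) * p + y * N = 1 := mod_cast congrArg (Int.cast : ℤ → O) hxy
  by_contra hne
  have hlt : v (N : O) < 1 := (natCast_mem v.integer N).lt_of_ne hne
  have hone_lt := v.map_add_lt (hmul x hv) (hmul y hlt)
  rw [hone, map_one] at hone_lt
  exact hone_lt.false

variable [Fact p.Prime]

theorem valuation_natCast_eq_pow (hv : v p < 1) {N : ℕ} (hN : N ≠ 0) :
    v (N : O) = v p ^ padicValNat p N := by
  have hp : p.Prime := Fact.out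
  conv_lhs => rw [← Nat.ordProj_mul_ordCompl_eq_self N p]
  rw [Nat.cast_mul, Nat.cast_pow, map_mul, map_pow,
    valuation_natCast_eq_one_of_coprime hv (Nat.coprime_ordCompl hp hN), mul_one,
    Nat.factorization_def N hp]

theorem charZero_of_valuation_natCast_lt_one (hv : v p < 1) (hv0 : v p ≠ 0) : CharZero O :=
  charZero_of_inj_zero fun N hN ↦ by
    by_contra hN0
    have := valuation_natCast_eq_pow hv hN0
    rw [hN, map_zero] at this
    exact pow_ne_zero _ hv0 this.symm

end Valuation

section SchurSum

open WithZero

variable {p : ℕ} [hp : Fact p.Prime] {e s : ℤ}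

theorem sub_one_mul_sub_mul_padicValNat_factorial (i : ℕ) :
    (p - 1 : ℤ) * (i * s - e * padicValNat p i.factorial) =
      digitWeight p e (e - (p - 1) * s) i := by
  have hlegendre : (p - 1 : ℤ) * padicValNat p i.factorial = i - (p.digits i).sum := by
    have := sub_one_mul_padicValNat_factorial (p := p) i
    rw [← Nat.cast_inj (R := ℤ), Nat.cast_mul, Nat.cast_sub hp.out.one_le,
      Nat.cast_sub (Nat.digit_sum_le p i)] at this
    exact mod_cast this
  rw [digitWeight]
  linear_combination (-e) * hlegendre

variable {O : Type*} [CommRing O] {v : Valuation O ℤᵐ⁰} {n : ℕ} {u : ℕ → O} {y : O}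

theorem factorial_div_factorial_ne_zero {i : ℕ} (hi : i ≤ n) :
    n.factorial / i.factorial ≠ 0 :=
  (Nat.div_pos (Nat.factorial_le hi) i.factorial_pos).ne'

theorem padicValNat_factorial_div_factorial {i : ℕ} (hi : i ≤ n) :
    (padicValNat p (n.factorial / i.factorial) : ℤ) =
      padicValNat p n.factorial - padicValNat p i.factorial := by
  rw [eq_sub_iff_add_eq, ← Nat.cast_add,
    ← padicValNat.mul (factorial_div_factorial_ne_zero hi) i.factorial_ne_zero,
    Nat.div_mul_cancel (Nat.factorial_dvd_factorial hi)]

variable (hpe : v p = exp (-e)) (he : 0 < e)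
include hpe he

theorem valuation_factorial_div_factorial_mul_mul_pow {i : ℕ} (hi : i ≤ n) {c : O} (hc : v c = 1)
    (hy : v y = exp (-s)) :
    v ((n.factorial / i.factorial : ℕ) * c * y ^ i) =
      exp (-(e * padicValNat p n.factorial + (i * s - e * padicValNat p i.factorial))) := by
  have hlt : v (p : O) < 1 := by rw [hpe, ← exp_zero, exp_lt_exp]; lia
  rw [map_mul, map_mul, map_pow, hc, hy, mul_one,
    valuation_natCast_eq_pow hlt (factorial_div_factorial_ne_zero hi), hpe,
    ← exp_nsmul, ← exp_nsmul, ← exp_add, nsmul_eq_mul, nsmul_eq_mul,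
    padicValNat_factorial_div_factorial hi]
  congr 1
  ring

variable (hu : ∀ i ≤ n, v (u i) = 1)
include hu

theorem isMinOn_digitWeight_of_forall_valuation_le (hy : v y = exp (-s)) {i : ℕ} (hi : i ≤ n)
    (hmax : ∀ k ≤ n, v ((n.factorial / k.factorial : ℕ) * u k * y ^ k) ≤
      v ((n.factorial / i.factorial : ℕ) * u i * y ^ i)) :
    IsMinOn (digitWeight p e (e - (p - 1) * s)) (Set.Iic n) i := by
  refine isMinOn_iff.2 fun k hk ↦ ?_
  have hle := hmax k hk
  rw [valuation_factorial_div_factorial_mul_mul_pow hpe he hk (hu k hk) hy,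
    valuation_factorial_div_factorial_mul_mul_pow hpe he hi (hu i hi) hy, exp_le_exp,
    neg_le_neg_iff, add_le_add_iff_left] at hle
  simp only [← sub_one_mul_sub_mul_padicValNat_factorial]
  exact mul_le_mul_of_nonneg_left hle (sub_nonneg.2 (mod_cast hp.out.one_le))

theorem pow_dvd_of_sum_factorial_div_factorial_eq_zero
    (hsum : ∑ i ∈ Finset.range (n + 1), (n.factorial / i.factorial : ℕ) * u i * y ^ i = 0)
    {m : ℕ} (hm : p ^ m ∣ n) : ((p ^ m : ℕ) : ℤ) ∣ e := by
  have hlt : v (p : O) < 1 := by rw [hpe, ← exp_zero, exp_lt_exp]; lia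
  have hconst : v ((n.factorial / Nat.factorial 0 : ℕ) * u 0 * y ^ 0) ≠ 0 := by
    rw [pow_zero, mul_one, map_mul, hu 0 n.zero_le, mul_one,
      valuation_natCast_eq_pow hlt (factorial_div_factorial_ne_zero n.zero_le), hpe]
    exact pow_ne_zero _ exp_ne_zero
  obtain ⟨i, hi, j, hj, hij, heq, hi0, hmax⟩ :=
    exists_ne_valuation_eq_of_sum_eq_zero v hsum ⟨0, by simp, hconst⟩
  simp only [Finset.mem_range, Nat.lt_succ_iff] at hi hj hmax
  wlog hlt' : i < j generalizing i j
  · exact this j i hij.symm heq.symm (heq ▸ hi0) hj hi (heq ▸ hmax) (by lia)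
  have hy0 : v y ≠ 0 := fun h ↦ by
    rw [heq, map_mul, map_pow, h, zero_pow (by lia), mul_zero] at hi0
    exact hi0 rfl
  have hy : v y = exp (-(-log (v y))) := by rw [neg_neg, exp_log hy0]
  have hmini := isMinOn_digitWeight_of_forall_valuation_le hpe he hu hy hi hmax
  have hminj := isMinOn_digitWeight_of_forall_valuation_le hpe he hu hy hj (heq ▸ hmax)
  obtain ⟨l, hl, heq⟩ :=
    exists_eq_mul_pow_of_isMinOn_digitWeight hp.out.one_lt hmini hi he hm hminj hj hlt'
  rw [heq, Nat.cast_pow]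
  exact (pow_dvd_pow _ hl).mul_left _

end SchurSum

section SchurPolynomial

variable {R : Type*} [CommRing R]

/-- The polynomial `F = ∑_{i < n} (n! / i!) a_i φ ^ i + φ ^ n`. Over a field of characteristic zero
and for `φ = X` it is `n!` times the polynomial `∑ a_i X ^ i / i!` (with `a_n = 1`) studied by
Schur. -/
noncomputable def schurPolynomial (φ : R[X]) (a : ℕ → R[X]) (n : ℕ) : R[X] :=
  ∑ i ∈ Finset.range n, C ((n.factorial / i.factorial : ℕ) : R) * a i * φ ^ i + φ ^ n

variable {φ : R[X]} {a : ℕ → R[X]} {n : ℕ}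

theorem map_schurPolynomial {S : Type*} [CommRing S] (f : R →+* S) :
    (schurPolynomial φ a n).map f = schurPolynomial (φ.map f) (fun i ↦ (a i).map f) n := by
  simp [schurPolynomial, Polynomial.map_sum]

theorem monic_schurPolynomial (hφ : φ.Monic) (hdeg : ∀ i < n, (a i).degree < φ.degree) :
    (schurPolynomial φ a n).Monic := by
  nontriviality R
  refine (hφ.pow n).add_of_right ((degree_sum_le _ _).trans_lt ?_)
  refine (Finset.sup_lt_iff (bot_lt_iff_ne_bot.2 (degree_ne_bot.2 (hφ.pow n).ne_zero))).2
    fun i hi ↦ ?_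
  have hin : i < n := Finset.mem_range.1 hi
  calc (C ((n.factorial / i.factorial : ℕ) : R) * a i * φ ^ i).degree
      = (C ((n.factorial / i.factorial : ℕ) : R) * a i).degree + (φ ^ i).degree :=
        (hφ.pow i).degree_mul
    _ ≤ (a i).degree + (φ ^ i).degree := by
      rw [← smul_eq_C_mul]
      gcongr
      exact degree_smul_le _ _
    _ < φ.degree + (φ ^ i).degree :=
      WithBot.add_lt_add_right (degree_ne_bot.2 (hφ.pow i).ne_zero) (hdeg i hin)
    _ = (φ ^ (i + 1)).degree := by rw [pow_succ', (hφ.pow i).degree_mul]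
    _ ≤ (φ ^ n).degree := by
      rw [degree_eq_natDegree (hφ.pow _).ne_zero, degree_eq_natDegree (hφ.pow n).ne_zero,
        hφ.natDegree_pow, hφ.natDegree_pow]
      exact mod_cast Nat.mul_le_mul_right _ hin

variable {O : Type*} [CommRing O] [Algebra R O] {θ : O}

theorem aeval_schurPolynomial :
    aeval θ (schurPolynomial φ a n) = ∑ i ∈ Finset.range (n + 1),
      (n.factorial / i.factorial : ℕ) * Function.update (fun i ↦ aeval θ (a i)) n 1 i *
        aeval θ φ ^ i := by
  rw [Finset.sum_range_succ, Function.update_self, Nat.div_self n.factorial_pos, Nat.cast_one,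
    one_mul, one_mul, schurPolynomial, map_add, map_sum, map_pow]
  congr 1
  refine Finset.sum_congr rfl fun i hi ↦ ?_
  rw [Function.update_of_ne (Finset.mem_range.1 hi).ne]
  simp

theorem dvd_factorial_div_factorial {i : ℕ} (hi : i < n) : n ∣ n.factorial / i.factorial := by
  obtain ⟨k, rfl⟩ := Nat.exists_eq_add_one_of_ne_zero (Nat.ne_zero_of_lt hi)
  rw [Nat.factorial_succ,
    Nat.mul_div_assoc _ (Nat.factorial_dvd_factorial (Nat.lt_succ_iff.1 hi))]
  exact dvd_mul_right _ _

theorem aeval_mem_of_aeval_schurPolynomial_eq_zero {P : Ideal O} [hP : P.IsPrime]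
    (hn : (n : O) ∈ P) (hθ : aeval θ (schurPolynomial φ a n) = 0) : aeval θ φ ∈ P := by
  refine hP.mem_of_pow_mem n ?_
  rw [schurPolynomial, map_add, map_sum, map_pow] at hθ
  rw [eq_neg_of_add_eq_zero_right hθ]
  refine neg_mem (sum_mem fun i hi ↦ ?_)
  obtain ⟨c, hc⟩ := dvd_factorial_div_factorial (Finset.mem_range.1 hi)
  have hmem : ((n.factorial / i.factorial : ℕ) : O) ∈ P := by
    rw [hc, Nat.cast_mul]
    exact P.mul_mem_right _ hn
  simpa [mul_assoc] using P.mul_mem_right (aeval θ (a i) * aeval θ φ ^ i) hmem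

end SchurPolynomial

section Residue

variable {R O : Type*} [CommRing R] [CommRing O] [Algebra R O] {𝔭 : Ideal R} {P : Ideal O}
  [P.LiesOver 𝔭] {θ : O}

theorem natCast_mem_of_liesOver_of_dvd {p n : ℕ} (hp : (p : R) ∈ 𝔭) (hpn : p ∣ n) :
    (n : O) ∈ P := by
  rw [← map_natCast (algebraMap R O)]
  exact (Ideal.mem_of_liesOver P 𝔭 _).1 (𝔭.mem_of_dvd (Nat.cast_dvd_cast hpn) hp)

variable (𝔭 P θ) in
theorem aeval_mk_map_mk (f : R[X]) :
    aeval (Ideal.Quotient.mk P θ) (f.map (Ideal.Quotient.mk 𝔭)) =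
      Ideal.Quotient.mk P (aeval θ f) := by
  rw [aeval_def, eval₂_map, aeval_def, hom_eval₂]
  rfl

variable {φ : R[X]} (hφ : φ.Monic) (hirr : Irreducible (φ.map (Ideal.Quotient.mk 𝔭)))
  (hmem : aeval θ φ ∈ P)
include hφ hirr hmem

attribute [local instance] Ideal.Quotient.field

theorem minpoly_mk_eq_map_mk [𝔭.IsMaximal] [P.IsPrime] :
    minpoly (R ⧸ 𝔭) (Ideal.Quotient.mk P θ) = φ.map (Ideal.Quotient.mk 𝔭) := by
  refine (minpoly.eq_of_irreducible_of_monic hirr ?_ (hφ.map _)).symm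
  rw [aeval_mk_map_mk, Ideal.Quotient.eq_zero_iff_mem.2 hmem]

theorem aeval_notMem_of_degree_lt [𝔭.IsMaximal] [P.IsPrime] {f : R[X]}
    (hf : f.map (Ideal.Quotient.mk 𝔭) ≠ 0) (hdeg : f.degree < φ.degree) :
    aeval θ f ∉ P := fun hfP ↦ by
  have hle := minpoly.degree_le_of_ne_zero (R ⧸ 𝔭) (Ideal.Quotient.mk P θ) hf
    (by rw [aeval_mk_map_mk, Ideal.Quotient.eq_zero_iff_mem.2 hfP])
  rw [minpoly_mk_eq_map_mk hφ hirr hmem, hφ.degree_map] at hle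
  exact (hle.trans degree_map_le).not_gt hdeg

theorem natDegree_dvd_inertiaDeg [𝔭.IsMaximal] [P.IsMaximal] : φ.natDegree ∣ P.inertiaDeg R := by
  have hmonic := hφ.map (Ideal.Quotient.mk 𝔭)
  have hint : IsIntegral (R ⧸ 𝔭) (Ideal.Quotient.mk P θ) :=
    ⟨_, hmonic, by
      rw [← aeval_def, aeval_mk_map_mk, Ideal.Quotient.eq_zero_iff_mem.2 hmem]⟩
  rw [Ideal.inertiaDeg_eq_of_isMaximal 𝔭 P, ← hφ.natDegree_map (Ideal.Quotient.mk 𝔭),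
    ← minpoly_mk_eq_map_mk hφ hirr hmem]
  exact minpoly.degree_dvd hint

end Residue

section Ramification

open IsDedekindDomain WithZero

variable {R : Type*} [CommRing R] [IsDedekindDomain R] {𝔭 : HeightOneSpectrum R} {p e n m : ℕ}
  [hp : Fact p.Prime] {φ : R[X]} {a : ℕ → R[X]}

variable (hpe : 𝔭.intValuation (p : R) = exp (-(e : ℤ))) (hcop : p.Coprime e)
  (hφ : φ.Monic) (hirr : Irreducible (φ.map (Ideal.Quotient.mk 𝔭.asIdeal)))
  (hdeg : ∀ i < n, (a i).degree < φ.degree)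
  (ha : ∀ i < n, (a i).map (Ideal.Quotient.mk 𝔭.asIdeal) ≠ 0)

include hpe hcop in
theorem intValuation_natCast_lt_one_of_coprime : 𝔭.intValuation (p : R) < 1 := by
  have he : e ≠ 0 := fun h ↦ hp.out.ne_one (by simpa [h] using hcop)
  rw [hpe, ← exp_zero, exp_lt_exp]
  lia

include hpe hcop in
theorem natCast_mem_asIdeal_of_coprime : (p : R) ∈ 𝔭.asIdeal :=
  (𝔭.intValuation_lt_one_iff_mem _).1 (intValuation_natCast_lt_one_of_coprime hpe hcop)

section Prime

variable {O : Type*} [CommRing O] [IsDedekindDomain O] [Algebra R O] [Module.IsTorsionFree R O]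
  {P : HeightOneSpectrum O} [P.asIdeal.LiesOver 𝔭.asIdeal] {θ : O}

include hpe hcop hφ hirr hdeg ha in
theorem pow_dvd_ramificationIdx (hm : p ^ m ∣ n) (hmem : aeval θ φ ∈ P.asIdeal)
    (hθ : aeval θ (schurPolynomial φ a n) = 0) : p ^ m ∣ P.asIdeal.ramificationIdx R := by
  have hpP : P.intValuation (p : O) = exp (-((e * P.asIdeal.ramificationIdx R : ℕ) : ℤ)) := by
    rw [← map_natCast (algebraMap R O), ← 𝔭.intValuation_liesOver P, hpe,
      Ideal.ramificationIdx'_eq_ramificationIdx _ _ 𝔭.ne_bot, ← exp_nsmul, nsmul_eq_mul]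
    congr 1
    push_cast
    ring
  have hunit (i : ℕ) (hi : i ≤ n) :
      P.intValuation (Function.update (fun i ↦ aeval θ (a i)) n 1 i) = 1 := by
    rcases hi.eq_or_lt with rfl | hi
    · simp
    · rw [Function.update_of_ne hi.ne, P.intValuation_eq_one_iff]
      exact aeval_notMem_of_degree_lt hφ hirr hmem (ha i hi) (hdeg i hi)
  have hpos : 0 < ((e * P.asIdeal.ramificationIdx R : ℕ) : ℤ) := by
    have hmemP : (p : O) ∈ P.asIdeal :=
      natCast_mem_of_liesOver_of_dvd (natCast_mem_asIdeal_of_coprime hpe hcop) dvd_rfl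
    have hlt := (P.intValuation_lt_one_iff_mem _).2 hmemP
    rwa [hpP, ← exp_zero, exp_lt_exp, neg_lt_zero] at hlt
  rw [aeval_schurPolynomial] at hθ
  exact (hcop.pow_left m).dvd_of_dvd_mul_left
    (mod_cast pow_dvd_of_sum_factorial_div_factorial_eq_zero hpP hpos hunit hθ hm)

end Prime

include hpe hcop hφ hirr hdeg ha

theorem pow_mul_natDegree_dvd_finrank_of_dedekind {O : Type*} [CommRing O] [IsDedekindDomain O]
    [Algebra R O] [Module.IsTorsionFree R O] [Module.Finite R O] (hpn : p ∣ n) (hm : p ^ m ∣ n)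
    {θ : O} (hθ : aeval θ (schurPolynomial φ a n) = 0) :
    p ^ m * φ.natDegree ∣ Module.finrank R O := by
  rw [← Ideal.sum_ramification_inertia_eq_finrank 𝔭.asIdeal O]
  refine Finset.dvd_sum fun ⟨P, hP, hPover⟩ _ ↦ ?_
  let w : HeightOneSpectrum O := ⟨P, hP, Ideal.ne_bot_of_liesOver_of_ne_bot 𝔭.ne_bot P⟩
  have : w.asIdeal.LiesOver 𝔭.asIdeal := hPover
  have := w.isMaximal
  change p ^ m * φ.natDegree ∣ w.asIdeal.ramificationIdx R * w.asIdeal.inertiaDeg R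
  have hmem : aeval θ φ ∈ w.asIdeal := aeval_mem_of_aeval_schurPolynomial_eq_zero
    (natCast_mem_of_liesOver_of_dvd (natCast_mem_asIdeal_of_coprime hpe hcop) hpn) hθ
  exact mul_dvd_mul (pow_dvd_ramificationIdx hpe hcop hφ hirr hdeg ha hm hmem hθ)
    (natDegree_dvd_inertiaDeg hφ hirr hmem)

theorem pow_mul_natDegree_dvd_finrank {K L : Type*} [Field K] [Algebra R K] [IsFractionRing R K]
    [Field L] [Algebra K L] [Algebra R L] [IsScalarTower R K L] [FiniteDimensional K L]
    (hpn : p ∣ n) (hm : p ^ m ∣ n) {θ : L} (hθ : aeval θ (schurPolynomial φ a n) = 0) :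
    p ^ m * φ.natDegree ∣ Module.finrank K L := by
  have : CharZero R := charZero_of_valuation_natCast_lt_one
    (intValuation_natCast_lt_one_of_coprime hpe hcop) (hpe ▸ exp_ne_zero)
  have : CharZero K := charZero_of_injective_algebraMap (IsFractionRing.injective R K)
  let O := integralClosure R L
  have : Module.Finite R O := IsIntegralClosure.finite R K L O
  have : IsDedekindDomain O := integralClosure.isDedekindDomain R K L
  have : IsFractionRing O L := integralClosure.isFractionRing_of_finite_extension K L
  have : FaithfulSMul R L := .trans R K L
  rw [IsFractionRing.finrank_eq R K O L]
  let θ' : O := ⟨θ, _, monic_schurPolynomial hφ hdeg, hθ⟩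
  refine pow_mul_natDegree_dvd_finrank_of_dedekind hpe hcop hφ hirr hdeg ha hpn hm
    (θ := θ') (FaithfulSMul.algebraMap_injective O L ?_)
  rw [← aeval_algebraMap_apply, map_zero]
  exact hθ

end Ramification

open IsDedekindDomain in
theorem padic_factor_degree_general {R K : Type*} [CommRing R] [IsDedekindDomain R] [Field K]
    [Algebra R K] [IsFractionRing R K] {𝔭 : HeightOneSpectrum R} {p e n m : ℕ} [Fact p.Prime]
    (hpe : 𝔭.intValuation (p : R) = WithZero.exp (-(e : ℤ))) (hcop : p.Coprime e)
    (hpn : p ∣ n) (hm : p ^ m ∣ n) {φ : R[X]} (hφ : φ.Monic)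
    (hirr : Irreducible (φ.map (Ideal.Quotient.mk 𝔭.asIdeal))) {a : ℕ → R[X]}
    (hdeg : ∀ i < n, (a i).degree < φ.degree)
    (ha : ∀ i < n, (a i).map (Ideal.Quotient.mk 𝔭.asIdeal) ≠ 0) {g : K[X]} (hg : Irreducible g)
    (hdvd : g ∣ (schurPolynomial φ a n).map (algebraMap R K)) :
    p ^ m * φ.natDegree ∣ g.natDegree := by
  have : Fact (Irreducible g) := ⟨hg⟩
  have : FiniteDimensional K (AdjoinRoot g) := (AdjoinRoot.powerBasis hg.ne_zero).finite
  have hroot : aeval (AdjoinRoot.root g) (schurPolynomial φ a n) = 0 := by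
    rw [← aeval_map_algebraMap K, AdjoinRoot.aeval_eq]
    exact AdjoinRoot.mk_eq_zero.2 hdvd
  rw [← AdjoinRoot.powerBasis_dim hg.ne_zero, ← PowerBasis.finrank]
  exact pow_mul_natDegree_dvd_finrank hpe hcop hφ hirr hdeg ha hpn hm hroot

section IntReduction

variable {R : Type*} [CommRing R] {𝔭 : Ideal R} {p : ℕ} (E : R ⧸ 𝔭 ≃+* ZMod p)

theorem mapEquiv_map_mk_map_castRingHom (f : ℤ[X]) :
    mapEquiv E ((f.map (Int.castRingHom R)).map (Ideal.Quotient.mk 𝔭)) =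
      f.map (Int.castRingHom (ZMod p)) := by
  rw [mapEquiv_apply, Polynomial.map_map, Polynomial.map_map]
  congr 1
  exact RingHom.ext_int _ _

include E

theorem irreducible_map_mk_of_irreducible_map_zmod {f : ℤ[X]}
    (hf : Irreducible (f.map (Int.castRingHom (ZMod p)))) :
    Irreducible ((f.map (Int.castRingHom R)).map (Ideal.Quotient.mk 𝔭)) := by
  rwa [← mapEquiv_map_mk_map_castRingHom E, MulEquiv.irreducible_iff] at hf

theorem map_mk_ne_zero_of_isCoprime_content (hp : p ≠ 1) {f : ℤ[X]}
    (hf : IsCoprime f.content (p : ℤ)) :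
    (f.map (Int.castRingHom R)).map (Ideal.Quotient.mk 𝔭) ≠ 0 := fun hzero ↦ by
  have hzero' : f.map (Int.castRingHom (ZMod p)) = 0 := by
    rw [← mapEquiv_map_mk_map_castRingHom E, hzero, map_zero]
  have hdvd : C (p : ℤ) ∣ f := (C_dvd_iff_dvd_coeff _ _).2 fun i ↦ by
    rw [← ZMod.intCast_zmod_eq_zero_iff_dvd]
    simpa using congrArg (coeff · i) hzero'
  have hunit : IsUnit (p : ℤ) := hf.isUnit_of_dvd' (dvd_content_iff_C_dvd.2 hdvd) dvd_rfl
  exact hp (Nat.isUnit_iff.1 (Int.ofNat_isUnit.1 hunit))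

end IntReduction

theorem intValuation_maximalIdeal_padicInt (p : ℕ) [hp : Fact p.Prime] :
    (IsDiscreteValuationRing.maximalIdeal ℤ_[p]).intValuation (p : ℤ_[p]) =
      WithZero.exp (-((1 : ℕ) : ℤ)) :=
  IsDedekindDomain.HeightOneSpectrum.intValuation_singleton _ (mod_cast hp.out.ne_zero)
    PadicInt.maximalIdeal_eq_span_p

/-- Let `n ≥ 2`, `p` a prime dividing `n` with `p^m ∥ n` (`m ≥ 1` the exact power), and
`φ ∈ ℤ[x]` monic and irreducible mod `p`. If `a 0, …, a (n-1) ∈ ℤ[x]` have degree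
`< deg φ` and contents coprime to `p`, then every irreducible factor over `ℚ_p` of
`F = ∑_{i<n} (n!/i!)·(a i)·φ^i + φ^n` has degree divisible by `p^m·deg φ`. -/
theorem padic_factor_degree (p : ℕ) [hp : Fact p.Prime] (n : ℕ) (hn : 2 ≤ n)
    (hpn : p ∣ n) (m : ℕ) (hm : 1 ≤ m) (hpm : p ^ m ∣ n) (hpm' : ¬ p ^ (m + 1) ∣ n)
    (φ : ℤ[X]) (hφmonic : φ.Monic)
    (hφirr : Irreducible (φ.map (Int.castRingHom (ZMod p))))
    (a : ℕ → ℤ[X])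
    (hdeg : ∀ i < n, (a i).degree < φ.degree)
    (hcont : ∀ i < n, IsCoprime ((a i).content) (p : ℤ)) :
    ∀ g : Polynomial ℚ_[p], Irreducible g →
      g ∣ ((∑ i ∈ Finset.range n,
            C ((n.factorial / i.factorial : ℕ) : ℤ) * a i * φ ^ i
          + φ ^ n).map (Int.castRingHom ℚ_[p])) →
      (p ^ m * φ.natDegree) ∣ g.natDegree := by
  intro g hg hgF
  let E : ℤ_[p] ⧸ IsLocalRing.maximalIdeal ℤ_[p] ≃+* ZMod p := PadicInt.residueField
  rw [← hφmonic.natDegree_map (Int.castRingHom ℤ_[p])]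
  rw [← schurPolynomial, (RingHom.ext_int _ _ :
      Int.castRingHom ℚ_[p] = (algebraMap ℤ_[p] ℚ_[p]).comp (Int.castRingHom ℤ_[p])),
    ← Polynomial.map_map, map_schurPolynomial] at hgF
  exact padic_factor_degree_general (intValuation_maximalIdeal_padicInt p) p.coprime_one_right
    hpn hpm (hφmonic.map _) (irreducible_map_mk_of_irreducible_map_zmod E hφirr)
    (fun i hi ↦ degree_map_le.trans_lt (by rw [hφmonic.degree_map]; exact hdeg i hi))
    (fun i hi ↦ map_mk_ne_zero_of_isCoprime_content E hp.out.ne_one (hcont i hi)) hg hgF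
end
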